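/- arXiv:2402.12333 — 2 statements merged into one kernel-verified Lean document; each statement's English description precedes it below -/
import Mathlib

section
/- For all real x ≥ 1 and all t ∈ [0,1], one has ∑_{n ≤ x} t^{ω(n)} Δ(n) < 9380 · x · (log(ex))^{−1 + 4t/π}. -/
/-- The Erdős–Hooley Δ-function: the maximum over real `u` of the number of
divisors of `n` in the interval `(e^u, e^{u+1}]`. -/
noncomputable def hooleyDelta (n : ℕ) : ℕ :=
  sSup {m : ℕ | ∃ u : ℝ,
    m = (n.divisors.filter (fun d : ℕ => Real.exp u < (d : ℝ) ∧ (d : ℝ) ≤ Real.exp (u + 1))).card}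

/-!
Smooth the divisor count of `n` into the profile `F_n u = ∑_{d ∣ n} exp (-|u - log d|)`. It is
comparable to its own translates, so a constant multiple of `‖F_n‖₄` dominates `hooleyDelta n`.
For a prime `p ∤ m` the profile of `m * p` is `F_m` plus its translate by `log p`: if the
translates were orthogonal the fourth power of the norm would just double, and averaged over `p`
with weights `log p * p ^ (-(1 + σ))` the cross terms are a lower order error, by the upper bounds
of Chebyshev and Mertens. So a new prime costs a factor `2 ^ (1 / 4) < 1.19`, where the divisor
function costs `2`.

Put `L σ = ∑_{n ≤ N} t ^ ω(n) ‖F_n‖₄ n ^ (-(1 + σ))`. Writing `log n` in `-dL/dσ` as a sum over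
prime powers turns this into a differential inequality `-dL/dσ ≤ (1.19 t / σ + O(1)) L + error`,
whose error comes from the easy sum with `‖F_n‖₄` replaced by the number of divisors and is
`O(σ ^ (-(b t) - 1))` as soon as `b ≥ 5 / 4`. Integrating gives `L σ = O(σ ^ (-(b t)))` for
`b ≥ 1.27`, uniformly in `N`; since `1.27 < 4 / π`, Rankin's choice `σ = 1 / log (e x)` and one more
application of the prime power identity for `log n` give the result.
-/

section

open Finset MeasureTheory Real

/-! ### Sums over primes -/

lemma sum_Ioc_le_sub_of_le_sub {f G : ℕ → ℝ} {a b : ℕ} (hab : a ≤ b)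
    (h : ∀ n, a ≤ n → f (n + 1) ≤ G n - G (n + 1)) : ∑ n ∈ Ioc a b, f n ≤ G a - G b := by
  induction b, hab using Nat.le_induction with
  | base => simp
  | succ b hab ih =>
    rw [sum_Ioc_succ_top hab]
    linarith [h b hab]

lemma sum_Ioc_le_of_le_sub {f G : ℕ → ℝ} {a : ℕ} (b : ℕ) (hG : ∀ n, 0 ≤ G n)
    (h : ∀ n, a ≤ n → f (n + 1) ≤ G n - G (n + 1)) : ∑ n ∈ Ioc a b, f n ≤ G a := by
  rcases le_total a b with hab | hba
  · linarith [sum_Ioc_le_sub_of_le_sub hab h, hG b]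
  · rw [Ioc_eq_empty_of_le hba, sum_empty]
    exact hG a

lemma sum_mul_le_sum_mul_of_partial_sums_le {a e g : ℕ → ℝ}
    (hae : ∀ n, ∑ k ∈ Icc 1 n, a k ≤ ∑ k ∈ Icc 1 n, e k)
    (hg : ∀ n, 1 ≤ n → g (n + 1) ≤ g n) (hg0 : ∀ n, 0 ≤ g n) (N : ℕ) :
    ∑ k ∈ Icc 1 N, a k * g k ≤ ∑ k ∈ Icc 1 N, e k * g k := by
  have abel : ∀ n, (∑ k ∈ Icc 1 n, (e k - a k)) * g n ≤ ∑ k ∈ Icc 1 n, (e k - a k) * g k := by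
    intro n
    induction n with
    | zero => simp
    | succ n ih =>
      rw [sum_Icc_succ_top (by omega), sum_Icc_succ_top (by omega), add_mul]
      gcongr
      refine le_trans ?_ ih
      rcases Nat.eq_zero_or_pos n with rfl | hn
      · simp
      · refine mul_le_mul_of_nonneg_left (hg n hn) ?_
        rw [sum_sub_distrib]
        exact sub_nonneg.2 (hae n)
  have hN := abel N
  have hnonneg : 0 ≤ (∑ k ∈ Icc 1 N, (e k - a k)) * g N := by
    rw [sum_sub_distrib]
    exact mul_nonneg (sub_nonneg.2 (hae N)) (hg0 N)
  simp only [sub_mul, sum_sub_distrib] at hN hnonneg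
  linarith

lemma sum_primesLE_eq_sum_Icc (N : ℕ) (f : ℕ → ℝ) :
    ∑ p ∈ Nat.primesLE N, f p = ∑ n ∈ Icc 1 N, if n.Prime then f n else 0 := by
  rw [Nat.primesLE_eq_filter_Icc_one, sum_filter]

lemma sum_log_primesLE_le (N : ℕ) : ∑ p ∈ Nat.primesLE N, log p ≤ log 4 * N := by
  rw [← Chebyshev.theta_eq_sum_primesLE_log]
  exact Chebyshev.theta_le_log4_mul_x (Nat.cast_nonneg N)

lemma sum_div_mul_log_primesLE_le_log_factorial (N : ℕ) :
    ∑ p ∈ Nat.primesLE N, ((N / p : ℕ) : ℝ) * log p ≤ log (N.factorial : ℝ) := by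
  rw [log_nat_eq_sum_factorization, Finsupp.sum_of_support_subset (s := Nat.primesLE N)]
  · refine sum_le_sum fun p hp => mul_le_mul_of_nonneg_right ?_ (log_natCast_nonneg p)
    rw [Nat.factorization_factorial (Nat.prime_of_mem_primesLE hp)
      (by omega : Nat.log p N < Nat.log p N + 2)]
    norm_cast
    simpa only [pow_one] using single_le_sum (f := fun i => N / p ^ i)
      (fun _ _ => Nat.zero_le _) (mem_Ico.2 ⟨le_rfl, by omega⟩ : 1 ∈ Ico 1 (Nat.log p N + 2))
  · intro p hp
    have hprime := Nat.prime_of_mem_primeFactors hp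
    exact Nat.mem_primesLE.2 ⟨hprime.dvd_factorial.1 (Nat.dvd_of_mem_primeFactors hp), hprime⟩
  · simp

lemma sum_log_div_primesLE_le {N : ℕ} (hN : N ≠ 0) :
    ∑ p ∈ Nat.primesLE N, log p / p ≤ log N + log 4 := by
  have hN' : (0 : ℝ) < N := by positivity
  have hfactorial : log (N.factorial : ℝ) ≤ N * log N := by
    rw [← log_pow]
    exact log_le_log (by positivity) (by exact_mod_cast Nat.factorial_le_pow N)
  have hfloor : ∑ p ∈ Nat.primesLE N, (N * (log p / p) - log p)
      ≤ ∑ p ∈ Nat.primesLE N, ((N / p : ℕ) : ℝ) * log p := by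
    refine sum_le_sum fun p _ => ?_
    calc N * (log p / p) - log p = ((N : ℝ) / p - 1) * log p := by ring
      _ ≤ ((N / p : ℕ) : ℝ) * log p := by
        refine mul_le_mul_of_nonneg_right ?_ (log_natCast_nonneg p)
        rw [← Nat.floor_div_eq_div (K := ℝ)]
        exact (Nat.sub_one_lt_floor _).le
  rw [sum_sub_distrib, ← mul_sum] at hfloor
  refine le_of_mul_le_mul_left ?_ hN'
  linarith [sum_log_primesLE_le N, sum_div_mul_log_primesLE_le_log_factorial N]

lemma log_sub_log_mul_rpow_neg_le {a b σ : ℝ} (ha : 0 < a) (hb : 0 < b) (hσ : 0 < σ) :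
    (log b - log a) * b ^ (-σ) ≤ a ^ (-σ) / σ - b ^ (-σ) / σ := by
  have hsplit : a ^ (-σ) = exp ((log b - log a) * σ) * b ^ (-σ) := by
    rw [rpow_def_of_pos ha, rpow_def_of_pos hb, ← exp_add]
    ring_nf
  rw [← sub_div, le_div_iff₀ hσ, hsplit]
  nlinarith [mul_le_mul_of_nonneg_right (add_one_le_exp ((log b - log a) * σ))
    (rpow_nonneg hb.le (-σ))]

lemma sum_Ioc_one_log_sub_log_mul_rpow_le (N : ℕ) {σ : ℝ} (hσ : 0 < σ) :
    ∑ n ∈ Ioc 1 N, (log n - log (n - 1 : ℕ)) * (n : ℝ) ^ (-σ) ≤ 1 / σ := by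
  refine (sum_Ioc_le_of_le_sub N (G := fun n => (n : ℝ) ^ (-σ) / σ) (fun n => by positivity)
    fun n hn => ?_).trans_eq (by simp)
  exact log_sub_log_mul_rpow_neg_le (by positivity) (by positivity) hσ

lemma sum_log_mul_rpow_primesLE_le (N : ℕ) {σ : ℝ} (hσ : 0 < σ) :
    ∑ p ∈ Nat.primesLE N, log p * (p : ℝ) ^ (-(1 + σ)) ≤ 1 / σ + log 4 := by
  rcases eq_or_ne N 0 with rfl | hN
  · simpa using add_nonneg (inv_nonneg.2 hσ.le) (log_nonneg (by norm_num : (1 : ℝ) ≤ 4))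
  let e : ℕ → ℝ := fun n => if n = 1 then log 4 else log n - log (n - 1 : ℕ)
  have sum_e : ∀ n ≠ 0, ∑ k ∈ Icc 1 n, e k = log n + log 4 := by
    intro n hn
    induction n, Nat.one_le_iff_ne_zero.2 hn using Nat.le_induction with
    | base => simp [e]
    | succ n hn ih =>
      rw [sum_Icc_succ_top (by omega), ih (by omega)]
      simp only [e, if_neg (show n + 1 ≠ 1 by omega), Nat.add_sub_cancel]
      ring
  calc ∑ p ∈ Nat.primesLE N, log p * (p : ℝ) ^ (-(1 + σ))
      = ∑ k ∈ Icc 1 N, (if k.Prime then log k / k else 0) * (k : ℝ) ^ (-σ) := by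
        rw [sum_primesLE_eq_sum_Icc]
        refine sum_congr rfl fun k hk => ?_
        have hk0 : (0 : ℝ) < k := by exact_mod_cast (mem_Icc.1 hk).1
        rw [ite_mul, zero_mul, neg_add, rpow_add hk0, rpow_neg_one, div_eq_mul_inv, mul_assoc]
    _ ≤ ∑ k ∈ Icc 1 N, e k * (k : ℝ) ^ (-σ) := by
        refine sum_mul_le_sum_mul_of_partial_sums_le (fun n => ?_) (fun n hn => ?_)
          (fun n => by positivity) N
        · rcases eq_or_ne n 0 with rfl | hn
          · simp
          · rw [sum_e n hn, ← sum_primesLE_eq_sum_Icc n (fun p => log p / p)]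
            exact sum_log_div_primesLE_le hn
        · exact rpow_le_rpow_of_nonpos (by positivity) (by push_cast; linarith) (by linarith)
    _ = ∑ n ∈ Ioc 1 N, (log n - log (n - 1 : ℕ)) * (n : ℝ) ^ (-σ) + log 4 := by
        rw [← sum_Ioc_add_eq_sum_Icc (Nat.one_le_iff_ne_zero.2 hN)]
        congr 1
        · exact sum_congr rfl fun n hn => by simp [e, (mem_Ioc.1 hn).1.ne']
        · simp [e]
    _ ≤ 1 / σ + log 4 := by
        gcongr
        exact sum_Ioc_one_log_sub_log_mul_rpow_le N hσ

lemma sum_Ioc_one_div_sq_le (k N : ℕ) :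
    ∑ n ∈ Ioc k N, 1 / (n : ℝ) ^ 2 ≤ 1 / ((k : ℝ) + 1 / 2) := by
  refine sum_Ioc_le_of_le_sub N (G := fun n => 1 / ((n : ℝ) + 1 / 2)) (fun n => by positivity)
    fun n _ => ?_
  push_cast
  rw [div_sub_div _ _ (by positivity) (by positivity)]
  exact (div_le_div_iff₀ (by positivity) (by positivity)).2 (by nlinarith)

lemma sum_min_inv_div_sq_le {Y : ℝ} (hY : 0 < Y) (N : ℕ) :
    ∑ n ∈ Icc 1 N, min (1 / Y) (Y / (n : ℝ) ^ 2) ≤ 2 := by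
  set M := ⌊Y⌋₊
  have hMY : (M : ℝ) ≤ Y := Nat.floor_le hY.le
  have hYM : Y < M + 1 := Nat.lt_floor_add_one Y
  calc ∑ n ∈ Icc 1 N, min (1 / Y) (Y / (n : ℝ) ^ 2)
      ≤ ∑ n ∈ Icc 1 M ∪ Ioc M N, min (1 / Y) (Y / (n : ℝ) ^ 2) := by
        refine sum_le_sum_of_subset_of_nonneg (fun n hn => ?_) fun n _ _ => by positivity
        simp only [mem_union, mem_Icc, mem_Ioc] at hn ⊢
        omega
    _ ≤ ∑ n ∈ Icc 1 M, 1 / Y + ∑ n ∈ Ioc M N, Y / (n : ℝ) ^ 2 := by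
        rw [sum_union (disjoint_left.2 fun n h1 h2 =>
          (mem_Ioc.1 h2).1.not_ge (mem_Icc.1 h1).2)]
        gcongr
        · exact min_le_left _ _
        · exact min_le_right _ _
    _ ≤ M / Y + Y / (M + 1 / 2) := by
        simp_rw [div_eq_mul_one_div Y, ← mul_sum]
        gcongr
        · simp [div_eq_mul_inv]
        · exact sum_Ioc_one_div_sq_le M N
    _ ≤ 2 := by
        rw [div_add_div _ _ hY.ne' (by positivity), div_le_iff₀ (by positivity)]
        nlinarith [mul_nonneg (sub_nonneg.2 hMY) (sub_nonneg.2 hYM.le)]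

lemma sum_log_div_mul_exp_primesLE_le (N : ℕ) (v : ℝ) :
    ∑ p ∈ Nat.primesLE N, log p / p * exp (-|v - log p|) ≤ 2 * log 4 := by
  obtain ⟨Y, hY, rfl⟩ : ∃ Y, 0 < Y ∧ log Y = v := ⟨exp v, exp_pos v, log_exp v⟩
  let g : ℕ → ℝ := fun n => min (1 / Y) (Y / (n : ℝ) ^ 2)
  have hkernel : ∀ n : ℕ, n ≠ 0 → exp (-|log Y - log n|) / n ≤ g n := by
    intro n hn
    have hn0 : (0 : ℝ) < n := by positivity
    refine le_min ?_ ?_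
    · calc exp (-|log Y - log n|) / n ≤ exp (log n - log Y) / n := by
            gcongr; linarith [le_abs_self (log Y - log n)]
        _ = 1 / Y := by rw [exp_sub, exp_log hn0, exp_log hY]; field_simp
    · calc exp (-|log Y - log n|) / n ≤ exp (log Y - log n) / n := by
            gcongr; linarith [neg_abs_le (log Y - log n)]
        _ = Y / (n : ℝ) ^ 2 := by rw [exp_sub, exp_log hn0, exp_log hY, div_div, sq]
  calc ∑ p ∈ Nat.primesLE N, log p / p * exp (-|log Y - log p|)
      ≤ ∑ p ∈ Nat.primesLE N, log p * g p := by
        refine sum_le_sum fun p hp => ?_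
        rw [div_mul_eq_mul_div, mul_div_assoc]
        exact mul_le_mul_of_nonneg_left (hkernel p (Nat.prime_of_mem_primesLE hp).ne_zero)
          (log_natCast_nonneg p)
    _ = ∑ k ∈ Icc 1 N, (if k.Prime then log k else 0) * g k := by
        rw [sum_primesLE_eq_sum_Icc]
        simp only [ite_mul, zero_mul]
    _ ≤ ∑ k ∈ Icc 1 N, log 4 * g k := by
        refine sum_mul_le_sum_mul_of_partial_sums_le (e := fun _ => log 4) (fun n => ?_)
          (fun n hn => ?_) (fun n => by positivity) N
        · rw [← sum_primesLE_eq_sum_Icc n (fun p => log p)]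
          simpa [mul_comm] using sum_log_primesLE_le n
        · simp only [g]
          gcongr
          omega
    _ ≤ log 4 * 2 := by
        rw [← mul_sum]
        exact mul_le_mul_of_nonneg_left (sum_min_inv_div_sq_le hY N) (log_nonneg (by norm_num))
    _ = 2 * log 4 := mul_comm _ _

lemma sum_primesLE_one_div_sq_le (N : ℕ) :
    ∑ p ∈ Nat.primesLE N, 1 / (p : ℝ) ^ 2 ≤ 2 / 3 := by
  rw [Nat.primesLE_eq_filter_Ioc_one]
  refine (sum_le_sum_of_subset_of_nonneg (filter_subset _ _) fun _ _ _ => by positivity).trans ?_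
  exact (sum_Ioc_one_div_sq_le 1 N).trans_eq (by norm_num)

lemma sum_Ioc_three_log_div_sq_le (N : ℕ) :
    ∑ n ∈ Ioc 3 N, log n / (n : ℝ) ^ 2 ≤ (1 + log 3) / 3 := by
  refine (sum_Ioc_le_of_le_sub N (G := fun n => (1 + log n) / n)
    (fun n => div_nonneg (add_nonneg zero_le_one (log_natCast_nonneg n)) (Nat.cast_nonneg n))
    fun n hn => ?_).trans_eq (by norm_num)
  have hn3 : (3 : ℝ) ≤ n := by exact_mod_cast hn
  have hn0 : (0 : ℝ) < n := by linarith
  have hstep : log (n + 1) - 1 / n ≤ log n := by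
    have := log_le_sub_one_of_pos (by positivity : (0 : ℝ) < (n + 1) / n)
    rw [log_div (by positivity) hn0.ne', add_div, div_self hn0.ne'] at this
    linarith
  have hlog : 1 + 1 / (n : ℝ) ≤ log (n + 1) := by
    have h4 : log 4 ≤ log ((n : ℝ) + 1) := log_le_log (by norm_num) (by linarith)
    have h3 : 1 / (n : ℝ) ≤ 1 / 3 := by gcongr
    linarith [log_two_gt_d9, log_four_eq]
  push_cast
  calc log ((n : ℝ) + 1) / ((n : ℝ) + 1) ^ 2
      ≤ log ((n : ℝ) + 1) / ((n : ℝ) + 1) ^ 2 +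
        (log (n + 1) - (1 + 1 / n)) / (n * ((n : ℝ) + 1) ^ 2) :=
        le_add_of_nonneg_right (div_nonneg (sub_nonneg.2 hlog) (by positivity))
    _ = (1 + (log (n + 1) - 1 / n)) / n - (1 + log ((n : ℝ) + 1)) / (n + 1) := by
        field_simp; ring
    _ ≤ (1 + log n) / n - (1 + log ((n : ℝ) + 1)) / (n + 1) := by gcongr

lemma sum_primesLE_log_div_sq_le (N : ℕ) :
    ∑ p ∈ Nat.primesLE N, log p / (p : ℝ) ^ 2 ≤ 1 := by
  have hnonneg : ∀ n : ℕ, 0 ≤ log n / (n : ℝ) ^ 2 := fun n =>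
    div_nonneg (log_natCast_nonneg n) (by positivity)
  calc ∑ p ∈ Nat.primesLE N, log p / (p : ℝ) ^ 2
      ≤ ∑ n ∈ insert 2 (insert 3 (Ioc 3 N)), log n / (n : ℝ) ^ 2 := by
        refine sum_le_sum_of_subset_of_nonneg (fun p hp => ?_) fun n _ _ => hnonneg n
        have := Nat.two_le_of_mem_primesLE hp
        have := Nat.le_of_mem_primesLE hp
        simp only [mem_insert, mem_Ioc]
        omega
    _ = log 2 / 4 + (log 3 / 9 + ∑ n ∈ Ioc 3 N, log n / (n : ℝ) ^ 2) := by
        rw [sum_insert (by simp), sum_insert (by simp)]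
        norm_num
    _ ≤ 1 := by
        linarith [sum_Ioc_three_log_div_sq_le N, log_two_lt_d9, log_three_lt_d9]

lemma sum_Ioc_one_mul_succ_div_pow_le {x : ℝ} (hx : 2 ≤ x) (K : ℕ) :
    ∑ k ∈ Ioc 1 K, (k : ℝ) * (k + 1) / x ^ k ≤ 28 / x ^ 2 := by
  have : 0 < x := by linarith
  calc ∑ k ∈ Ioc 1 K, (k : ℝ) * (k + 1) / x ^ k
      ≤ ∑ k ∈ Ioc 1 K, 4 / x ^ 2 * ((k : ℝ) * (k + 1) / 2 ^ k) := by
        refine sum_le_sum fun k hk => ?_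
        obtain ⟨j, rfl⟩ := Nat.exists_eq_add_of_le (mem_Ioc.1 hk).1
        have hpow : 4 * x ^ (2 + j) ≥ x ^ 2 * 2 ^ (2 + j) := by
          calc x ^ 2 * 2 ^ (2 + j) = 4 * (x ^ 2 * 2 ^ j) := by ring
            _ ≤ 4 * (x ^ 2 * x ^ j) := by gcongr
            _ = 4 * x ^ (2 + j) := by ring
        rw [div_mul_div_comm, div_le_div_iff₀ (by positivity) (by positivity)]
        nlinarith [mul_le_mul_of_nonneg_left hpow
          (by positivity : (0 : ℝ) ≤ ((2 + j : ℕ) : ℝ) * ((2 + j : ℕ) + 1))]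
    _ ≤ 4 / x ^ 2 * 7 := by
        rw [← mul_sum]
        gcongr
        refine (sum_Ioc_le_of_le_sub K (G := fun n => ((n : ℝ) ^ 2 + 5 * n + 8) / 2 ^ n)
          (fun n => by positivity) fun n _ => le_of_eq ?_).trans_eq (by norm_num)
        push_cast
        field_simp
        ring
    _ = 28 / x ^ 2 := by ring

lemma sum_primesLE_sum_Ioc_one_mul_log_le {a : ℕ → ℕ → ℝ} {c : ℝ} (hc : 0 ≤ c) (N K : ℕ)
    (ha : ∀ p ∈ Nat.primesLE N, ∀ k ∈ Ioc 1 K, a p k ≤ c * (k + 1) / (p : ℝ) ^ k) :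
    ∑ p ∈ Nat.primesLE N, ∑ k ∈ Ioc 1 K, a p k * (k * log p) ≤ 28 * c := by
  calc ∑ p ∈ Nat.primesLE N, ∑ k ∈ Ioc 1 K, a p k * (k * log p)
      ≤ ∑ p ∈ Nat.primesLE N, c * log p * ∑ k ∈ Ioc 1 K, (k : ℝ) * (k + 1) / (p : ℝ) ^ k := by
        simp_rw [mul_sum]
        refine sum_le_sum fun p hp => sum_le_sum fun k hk => ?_
        calc a p k * (k * log p) ≤ c * (k + 1) / (p : ℝ) ^ k * (k * log p) :=
              mul_le_mul_of_nonneg_right (ha p hp k hk)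
                (mul_nonneg (Nat.cast_nonneg k) (log_natCast_nonneg p))
          _ = c * log p * ((k : ℝ) * (k + 1) / (p : ℝ) ^ k) := by ring
    _ ≤ ∑ p ∈ Nat.primesLE N, c * log p * (28 / (p : ℝ) ^ 2) := by
        refine sum_le_sum fun p hp => mul_le_mul_of_nonneg_left ?_
          (mul_nonneg hc (log_natCast_nonneg p))
        exact sum_Ioc_one_mul_succ_div_pow_le
          (by exact_mod_cast Nat.two_le_of_mem_primesLE hp) K
    _ = 28 * c * ∑ p ∈ Nat.primesLE N, log p / (p : ℝ) ^ 2 := by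
        rw [mul_sum]
        exact sum_congr rfl fun p _ => by ring
    _ ≤ 28 * c := mul_le_of_le_one_right (by positivity) (sum_primesLE_log_div_sq_le N)

/-! ### Euler products -/

lemma sum_Icc_le_prod_primesLE_tsum {f : ℕ → ℝ} (hf : ∀ n, 0 ≤ f n) (hf1 : f 1 = 1)
    (hmul : ∀ {m n : ℕ}, m.Coprime n → f (m * n) = f m * f n)
    (hsum : ∀ {p : ℕ}, p.Prime → Summable fun e : ℕ => f (p ^ e)) (N : ℕ) :
    ∑ n ∈ Icc 1 N, f n ≤ ∏ p ∈ Nat.primesLE N, ∑' e : ℕ, f (p ^ e) := by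
  have heuler := (EulerProduct.summable_and_hasSum_smoothNumbers_prod_primesBelow_tsum hf1 hmul
    (fun hp => (hsum hp).norm) (N + 1)).2
  have hind := (hasSum_subtype_iff_indicator (f := f)).1 heuler
  refine le_trans (sum_le_sum fun n hn => ?_)
    (sum_le_hasSum (Icc 1 N) (fun n _ => Set.indicator_nonneg (fun m _ => hf m) n) hind)
  rw [Set.indicator_of_mem (Nat.mem_smoothNumbers_of_lt (mem_Icc.1 hn).1
    (Nat.lt_succ_of_le (mem_Icc.1 hn).2))]

lemma sum_range_rpow_neg_one_add_le {σ : ℝ} (hσ : 0 < σ) (N : ℕ) :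
    ∑ n ∈ range N, (n : ℝ) ^ (-(1 + σ)) ≤ 1 + 1 / σ := by
  calc ∑ n ∈ range N, (n : ℝ) ^ (-(1 + σ))
      ≤ ∑ n ∈ insert 0 (insert 1 (Ioc 1 N)), (n : ℝ) ^ (-(1 + σ)) := by
        refine sum_le_sum_of_subset_of_nonneg (fun n hn => ?_) fun n _ _ => by positivity
        rw [mem_range] at hn
        simp only [mem_insert, mem_Ioc]
        omega
    _ = 1 + ∑ n ∈ Ioc 1 N, (n : ℝ) ^ (-(1 + σ)) := by
        rw [sum_insert (by simp), sum_insert (by simp), Nat.cast_zero,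
          zero_rpow (by linarith), Nat.cast_one, one_rpow, zero_add]
    _ ≤ 1 + 1 / σ := by
        gcongr
        refine le_trans (sum_le_sum fun n hn => ?_) (sum_Ioc_one_log_sub_log_mul_rpow_le N hσ)
        obtain ⟨m, rfl⟩ := Nat.exists_eq_add_of_le' (mem_Ioc.1 hn).1.le
        have hm : (0 : ℝ) < m := by exact_mod_cast Nat.lt_of_succ_lt_succ (mem_Ioc.1 hn).1
        have hm1 : (0 : ℝ) < ((m + 1 : ℕ) : ℝ) := by positivity
        rw [neg_add, rpow_add hm1, rpow_neg_one, Nat.add_sub_cancel, ← log_div hm1.ne' hm.ne']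
        gcongr
        refine le_trans (le_of_eq ?_) (one_sub_inv_le_log_of_pos (by positivity))
        push_cast
        field_simp
        ring

lemma prod_primesLE_one_sub_rpow_inv_le {σ : ℝ} (hσ : 0 < σ) (N : ℕ) :
    ∏ p ∈ Nat.primesLE N, (1 - (p : ℝ) ^ (-(1 + σ)))⁻¹ ≤ 1 + 1 / σ := by
  let f : ℕ →* ℝ :=
    { toFun := fun n => (n : ℝ) ^ (-(1 + σ))
      map_one' := by simp
      map_mul' := fun a b => by
        push_cast
        exact mul_rpow (Nat.cast_nonneg a) (Nat.cast_nonneg b) }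
  have hsum : Summable f := summable_nat_rpow.2 (by linarith : -(1 + σ) < -1)
  calc ∏ p ∈ Nat.primesLE N, (1 - (p : ℝ) ^ (-(1 + σ)))⁻¹
      = ∑' m : (N + 1).smoothNumbers, f m :=
        EulerProduct.prod_primesBelow_geometric_eq_tsum_smoothNumbers hsum (N + 1)
    _ ≤ ∑' m, f m :=
        Summable.tsum_subtype_le f _ (fun n => rpow_nonneg (Nat.cast_nonneg n) _) hsum
    _ ≤ 1 + 1 / σ := hsum.tsum_le_of_sum_range_le (sum_range_rpow_neg_one_add_le hσ)

lemma neg_log_one_sub_le {y : ℝ} (hy0 : 0 ≤ y) (hy : y ≤ 1 / 2) : -log (1 - y) ≤ y + y ^ 2 := by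
  have hpos : 0 < 1 - y := by linarith
  rw [← log_inv, log_le_iff_le_exp (inv_pos.2 hpos)]
  refine le_trans ?_ (quadratic_le_exp_of_nonneg (by positivity))
  rw [inv_le_iff_one_le_mul₀ hpos]
  nlinarith [mul_nonneg (by positivity : 0 ≤ y ^ 2) (sub_nonneg.2 hy),
    mul_nonneg (by positivity : 0 ≤ y ^ 3) (sub_nonneg.2 hy),
    mul_nonneg (by positivity : 0 ≤ y ^ 4) (sub_nonneg.2 hy), (by positivity : 0 ≤ y ^ 4)]

lemma one_sub_add_mul_inv_sq_le {t y : ℝ} (ht : t ≤ 1) (hy0 : 0 ≤ y) (hy : y ≤ 1 / 2) :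
    1 - t + t * ((1 - y) ^ 2)⁻¹ ≤ exp (3 * y ^ 2) ^ (1 - t) * (((1 - y) ^ 2)⁻¹) ^ t := by
  have hpos : 0 < 1 - y := by linarith
  have hinv : ((1 - y) ^ 2)⁻¹ = exp (-2 * log (1 - y)) := by
    rw [neg_mul, exp_neg, mul_comm, exp_mul, exp_log hpos, rpow_two]
  calc 1 - t + t * ((1 - y) ^ 2)⁻¹
      = ((1 - y) ^ 2)⁻¹ * (-(1 - t) * (1 - (1 - y) ^ 2) + 1) := by field_simp; ring
    _ ≤ exp (-2 * log (1 - y)) * exp (-(1 - t) * (1 - (1 - y) ^ 2)) := by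
        rw [hinv]
        gcongr
        exact add_one_le_exp _
    _ ≤ exp (3 * y ^ 2) ^ (1 - t) * (((1 - y) ^ 2)⁻¹) ^ t := by
        rw [hinv, ← exp_mul, ← exp_mul, ← exp_add, ← exp_add, exp_le_exp]
        nlinarith [mul_le_mul_of_nonneg_left (neg_log_one_sub_le hy0 hy) (sub_nonneg.2 ht)]

lemma rpow_neg_one_add_le_one_div {x σ : ℝ} (hx : 1 ≤ x) (hσ : 0 ≤ σ) :
    x ^ (-(1 + σ)) ≤ 1 / x := by
  rw [one_div, ← rpow_neg_one]
  exact rpow_le_rpow_of_exponent_le hx (by linarith)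

lemma hasSum_pow_card_primeFactors_mul_card_divisors {p : ℕ} (hp : p.Prime) (t : ℝ) {s : ℝ}
    (hs : 0 < s) :
    HasSum (fun e : ℕ => t ^ #(p ^ e).primeFactors * #(p ^ e).divisors *
      ((p ^ e : ℕ) : ℝ) ^ (-s)) (1 - t + t * ((1 - (p : ℝ) ^ (-s)) ^ 2)⁻¹) := by
  have hp1 : (1 : ℝ) < p := by exact_mod_cast hp.one_lt
  have hy : ‖(p : ℝ) ^ (-s)‖ < 1 := by
    rw [norm_of_nonneg (by positivity)]
    exact rpow_lt_one_of_one_lt_of_neg hp1 (neg_lt_zero.2 hs)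
  have hgeom := (hasSum_choose_mul_geometric_of_norm_lt_one 1 hy).mul_left t
  rw [← one_div]
  refine ((hasSum_ite_eq 0 (1 - t)).add hgeom).congr_fun fun e => ?_
  rcases eq_or_ne e 0 with rfl | he
  · simp
  · have hpow : ((p ^ e : ℕ) : ℝ) ^ (-s) = ((p : ℝ) ^ (-s)) ^ e := by
      rw [Nat.cast_pow, rpow_pow_comm (Nat.cast_nonneg p)]
    rw [hpow, Nat.primeFactors_prime_pow he hp, Nat.divisors_prime_pow hp]
    simp only [card_singleton, pow_one, card_map, card_range, Nat.choose_one_right, if_neg he,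
      zero_add, mul_assoc]

lemma prime_rpow_neg_one_add_le_half {p : ℕ} (hp : p.Prime) {σ : ℝ} (hσ : 0 ≤ σ) :
    (p : ℝ) ^ (-(1 + σ)) ≤ 1 / 2 :=
  (rpow_neg_one_add_le_one_div (Nat.one_le_cast.2 hp.one_le) hσ).trans
    (one_div_le_one_div_of_le two_pos (Nat.ofNat_le_cast.2 hp.two_le))

lemma tsum_pow_card_primeFactors_mul_card_divisors_le {p : ℕ} (hp : p.Prime) {t σ : ℝ}
    (ht : t ∈ Set.Icc (0 : ℝ) 1) (hσ : 0 < σ) :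
    ∑' e : ℕ, t ^ #(p ^ e).primeFactors * #(p ^ e).divisors * ((p ^ e : ℕ) : ℝ) ^ (-(1 + σ)) ≤
      exp (3 * (1 / (p : ℝ) ^ 2)) ^ (1 - t) * (((1 - (p : ℝ) ^ (-(1 + σ)))⁻¹) ^ 2) ^ t := by
  have ht1 : 0 ≤ 1 - t := sub_nonneg.2 ht.2
  rw [(hasSum_pow_card_primeFactors_mul_card_divisors hp t (by linarith : 0 < 1 + σ)).tsum_eq,
    inv_pow, ← one_div_pow]
  refine (one_sub_add_mul_inv_sq_le ht.2 (by positivity)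
    (prime_rpow_neg_one_add_le_half hp hσ.le)).trans ?_
  gcongr
  exact rpow_neg_one_add_le_one_div (Nat.one_le_cast.2 hp.one_le) hσ.le

lemma sum_pow_card_primeFactors_mul_card_divisors_le {t σ : ℝ} (ht : t ∈ Set.Icc (0 : ℝ) 1)
    (hσ : 0 < σ) (N : ℕ) :
    ∑ n ∈ Icc 1 N, t ^ #n.primeFactors * #n.divisors * (n : ℝ) ^ (-(1 + σ)) ≤
      exp 2 ^ (1 - t) * ((1 + 1 / σ) ^ 2) ^ t := by
  let f : ℕ → ℝ := fun n => t ^ #n.primeFactors * #n.divisors * (n : ℝ) ^ (-(1 + σ))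
  have ht0 : 0 ≤ t := ht.1
  have ht1 : 0 ≤ 1 - t := sub_nonneg.2 ht.2
  have hf : ∀ n, 0 ≤ f n := fun n => by positivity
  have hmul : ∀ {m n : ℕ}, m.Coprime n → f (m * n) = f m * f n := fun {m n} h => by
    simp only [f, h.card_divisors_mul, h.primeFactors_mul, Nat.cast_mul,
      card_union_of_disjoint h.disjoint_primeFactors, pow_add,
      mul_rpow (Nat.cast_nonneg m) (Nat.cast_nonneg n)]
    ring
  have hsum : ∀ {p : ℕ}, p.Prime → Summable fun e : ℕ => f (p ^ e) := fun hp =>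
    (hasSum_pow_card_primeFactors_mul_card_divisors hp t (by linarith : 0 < 1 + σ)).summable
  have hinv : 0 ≤ ∏ p ∈ Nat.primesLE N, (1 - (p : ℝ) ^ (-(1 + σ)))⁻¹ :=
    prod_nonneg fun p hp => inv_nonneg.2 (by
      linarith [prime_rpow_neg_one_add_le_half (Nat.prime_of_mem_primesLE hp) hσ.le])
  calc ∑ n ∈ Icc 1 N, f n ≤ ∏ p ∈ Nat.primesLE N, ∑' e : ℕ, f (p ^ e) :=
        sum_Icc_le_prod_primesLE_tsum hf (by simp [f]) hmul hsum N
    _ ≤ ∏ p ∈ Nat.primesLE N,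
          exp (3 * (1 / (p : ℝ) ^ 2)) ^ (1 - t) * (((1 - (p : ℝ) ^ (-(1 + σ)))⁻¹) ^ 2) ^ t :=
        prod_le_prod (fun p _ => tsum_nonneg fun e => hf _) fun p hp =>
          tsum_pow_card_primeFactors_mul_card_divisors_le (Nat.prime_of_mem_primesLE hp) ht hσ
    _ = exp (3 * ∑ p ∈ Nat.primesLE N, 1 / (p : ℝ) ^ 2) ^ (1 - t) *
          ((∏ p ∈ Nat.primesLE N, (1 - (p : ℝ) ^ (-(1 + σ)))⁻¹) ^ 2) ^ t := by
        rw [prod_mul_distrib, finsetProd_rpow _ _ fun p _ => (exp_pos _).le, ← exp_sum, mul_sum,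
          finsetProd_rpow _ _ fun p _ => sq_nonneg _, prod_pow]
    _ ≤ exp 2 ^ (1 - t) * ((1 + 1 / σ) ^ 2) ^ t := by
        gcongr
        · linarith [sum_primesLE_one_div_sq_le N]
        · exact prod_primesLE_one_sub_rpow_inv_le hσ N

/-! ### The smoothed divisor profile -/

lemma integral_exp_neg_mul_abs {c : ℝ} (hc : 0 < c) : ∫ u : ℝ, exp (-(c * |u|)) = 2 / c := by
  rw [integral_comp_abs (f := fun x => exp (-(c * x)))]
  simp_rw [← neg_mul]
  rw [integral_exp_mul_Ioi (neg_lt_zero.2 hc), mul_zero, exp_zero]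
  field_simp

lemma integrable_exp_neg_mul_abs {c : ℝ} (hc : 0 < c) :
    Integrable fun u : ℝ => exp (-(c * |u|)) := by
  refine not_imp_comm.1 integral_undef ?_
  rw [integral_exp_neg_mul_abs hc]
  positivity

lemma integral_pow_sum_shift_le {ι : Type*} (s : Finset ι) (a : ι → ℝ) {f : ℝ → ℝ} {k : ℕ}
    (hf : ∀ u, 0 ≤ f u) (hint : Integrable fun u => f u ^ (k + 1)) :
    ∫ u, (∑ i ∈ s, f (u - a i)) ^ (k + 1) ≤ (#s : ℝ) ^ (k + 1) * ∫ u, f u ^ (k + 1) := by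
  have hshift (i : ι) : Integrable fun u => f (u - a i) ^ (k + 1) := hint.comp_sub_right (a i)
  calc ∫ u, (∑ i ∈ s, f (u - a i)) ^ (k + 1)
      ≤ ∫ u, (#s : ℝ) ^ k * ∑ i ∈ s, f (u - a i) ^ (k + 1) :=
        integral_mono_of_nonneg
          (.of_forall fun u => pow_nonneg (sum_nonneg fun i _ => hf _) _)
          ((integrable_finsetSum s fun i _ => hshift i).const_mul _)
          (.of_forall fun u => pow_sum_le_card_mul_sum_pow (fun i _ => hf _) k)
    _ = (#s : ℝ) ^ (k + 1) * ∫ u, f u ^ (k + 1) := by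
        rw [integral_const_mul, integral_finsetSum s fun i _ => hshift i]
        simp_rw [integral_sub_right_eq_self (fun u => f u ^ (k + 1))]
        rw [sum_const, nsmul_eq_mul]
        ring

lemma three_mul_integral_pow_three_le {f : ℝ → ℝ} (hf : ∀ u, 0 ≤ f u) (h1 : Integrable f)
    (h4 : Integrable fun u => f u ^ 4) {ν : ℝ} (hν : 0 < ν) :
    3 * ∫ u, f u ^ 3 ≤ 1 / ν ^ 2 * (∫ u, f u) + 2 * ν * ∫ u, f u ^ 4 := by
  have hpoint (u : ℝ) : 3 * f u ^ 3 ≤ 1 / ν ^ 2 * f u + 2 * ν * f u ^ 4 := by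
    set x := f u
    have hx : 0 ≤ x := hf u
    have hcube : 3 * (ν * x) ^ 2 ≤ 1 + 2 * (ν * x) ^ 3 := by
      nlinarith [mul_nonneg (sq_nonneg (ν * x - 1)) (by positivity : 0 ≤ 2 * (ν * x) + 1)]
    calc 3 * x ^ 3 = x / ν ^ 2 * (3 * (ν * x) ^ 2) := by field_simp
      _ ≤ x / ν ^ 2 * (1 + 2 * (ν * x) ^ 3) := by gcongr
      _ = 1 / ν ^ 2 * x + 2 * ν * x ^ 4 := by field_simp
  rw [← integral_const_mul, ← integral_const_mul, ← integral_const_mul,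
    ← integral_add (h1.const_mul _) (h4.const_mul _)]
  exact integral_mono_of_nonneg
    (.of_forall fun u => mul_nonneg zero_le_three (pow_nonneg (hf u) 3))
    ((h1.const_mul _).add (h4.const_mul _)) (.of_forall hpoint)

/-- The divisor profile of `n`: a smoothed count of the divisors of `n` close to `e ^ u`. The
two-sided exponential kernel makes translates of the profile comparable. -/
noncomputable def divisorProfile (n : ℕ) (u : ℝ) : ℝ :=
  ∑ d ∈ n.divisors, exp (-|u - log d|)

/-- The `L⁴` norm of the divisor profile of `n`, normalised so that `profileNorm 1 = 1`; it
dominates the Erdős–Hooley function up to a constant. -/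
noncomputable def profileNorm (n : ℕ) : ℝ :=
  (2 * ∫ u, divisorProfile n u ^ 4) ^ (1 / 4 : ℝ)

lemma divisorProfile_nonneg (n : ℕ) (u : ℝ) : 0 ≤ divisorProfile n u :=
  sum_nonneg fun _ _ => (exp_pos _).le

lemma divisorProfile_le_card_divisors (n : ℕ) (u : ℝ) : divisorProfile n u ≤ #n.divisors :=
  (sum_le_card_nsmul _ _ 1 fun d _ => exp_le_one_iff.2 (by simp)).trans_eq (nsmul_one _)

lemma divisorProfile_one (u : ℝ) : divisorProfile 1 u = exp (-|u|) := by
  simp [divisorProfile]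

lemma continuous_divisorProfile (n : ℕ) : Continuous (divisorProfile n) := by
  unfold divisorProfile
  fun_prop

lemma integrable_exp_neg_abs_sub (a : ℝ) : Integrable fun u : ℝ => exp (-|u - a|) := by
  simpa only [one_mul] using (integrable_exp_neg_mul_abs one_pos).comp_sub_right a

lemma integrable_divisorProfile (n : ℕ) : Integrable (divisorProfile n) :=
  integrable_finsetSum _ fun d _ => integrable_exp_neg_abs_sub (log d)

lemma integral_divisorProfile (n : ℕ) : ∫ u, divisorProfile n u = 2 * #n.divisors := by
  have hkernel (a : ℝ) : ∫ u : ℝ, exp (-|u - a|) = 2 := by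
    rw [integral_sub_right_eq_self (fun u : ℝ => exp (-|u|)) a]
    simpa using integral_exp_neg_mul_abs one_pos
  unfold divisorProfile
  rw [integral_finsetSum _ fun (d : ℕ) _ => integrable_exp_neg_abs_sub (log d)]
  simp [hkernel, mul_comm]

lemma integrable_divisorProfile_pow_mul (n k : ℕ) {g : ℝ → ℝ} (hg : Continuous g) {C : ℝ}
    (hC : ∀ u, |g u| ≤ C) : Integrable fun u => divisorProfile n u ^ (k + 1) * g u := by
  simp_rw [pow_succ', mul_assoc]
  refine (integrable_divisorProfile n).mul_bdd (c := (#n.divisors : ℝ) ^ k * C)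
    (((continuous_divisorProfile n).pow k).mul hg).aestronglyMeasurable (.of_forall fun u => ?_)
  have h0 := divisorProfile_nonneg n u
  rw [norm_mul, norm_pow, norm_of_nonneg h0]
  gcongr
  exacts [divisorProfile_le_card_divisors n u, hC u]

lemma integrable_divisorProfile_pow (n k : ℕ) :
    Integrable fun u => divisorProfile n u ^ (k + 1) := by
  simpa using integrable_divisorProfile_pow_mul n k (continuous_const (y := (1 : ℝ)))
    (fun _ => abs_one.le)

lemma integrable_divisorProfile_pow_mul_shift (n k : ℕ) (a : ℝ) :
    Integrable fun u => divisorProfile n u ^ (k + 1) * divisorProfile n (u - a) := by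
  have hcont := continuous_divisorProfile n
  refine integrable_divisorProfile_pow_mul n k (C := #n.divisors) (by fun_prop) fun u => ?_
  rw [abs_of_nonneg (divisorProfile_nonneg n _)]
  exact divisorProfile_le_card_divisors n _

lemma profileNorm_nonneg (n : ℕ) : 0 ≤ profileNorm n :=
  rpow_nonneg (mul_nonneg two_pos.le
    (integral_nonneg fun u => pow_nonneg (divisorProfile_nonneg n u) 4)) _

lemma profileNorm_pow_four (n : ℕ) : profileNorm n ^ 4 = 2 * ∫ u, divisorProfile n u ^ 4 := by
  rw [profileNorm, one_div]
  exact rpow_inv_natCast_pow (mul_nonneg two_pos.le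
    (integral_nonneg fun u => pow_nonneg (divisorProfile_nonneg n u) 4)) four_ne_zero

lemma profileNorm_one : profileNorm 1 = 1 := by
  have hpow (u : ℝ) : divisorProfile 1 u ^ 4 = exp (-(4 * |u|)) := by
    rw [divisorProfile_one, ← exp_nat_mul]
    ring_nf
  simp_rw [profileNorm, hpow, integral_exp_neg_mul_abs four_pos]
  norm_num

lemma exp_neg_abs_sub_mul_divisorProfile_le (n : ℕ) (u c : ℝ) :
    exp (-|u - c|) * divisorProfile n c ≤ divisorProfile n u := by
  unfold divisorProfile
  rw [mul_sum]
  refine sum_le_sum fun d _ => ?_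
  rw [← exp_add, exp_le_exp]
  linarith [abs_sub_le u c (log d)]

lemma divisorProfile_le_profileNorm (n : ℕ) (c : ℝ) : divisorProfile n c ≤ profileNorm n := by
  refine le_of_pow_le_pow_left₀ four_ne_zero (profileNorm_nonneg n) ?_
  rw [profileNorm_pow_four]
  calc divisorProfile n c ^ 4
      = 2 * ∫ u, exp (-(4 * |u - c|)) * divisorProfile n c ^ 4 := by
        rw [integral_mul_const, integral_sub_right_eq_self (fun u : ℝ => exp (-(4 * |u|))) c,
          integral_exp_neg_mul_abs four_pos]
        ring
    _ ≤ 2 * ∫ u, divisorProfile n u ^ 4 := by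
        refine mul_le_mul_of_nonneg_left (integral_mono_of_nonneg (.of_forall fun u => ?_)
          (integrable_divisorProfile_pow n 3) (.of_forall fun u => ?_)) zero_le_two
        · positivity
        · have hexp : exp (-(4 * |u - c|)) = exp (-|u - c|) ^ 4 := by
            rw [← exp_nat_mul]
            ring_nf
          simp only [hexp, ← mul_pow]
          exact pow_le_pow_left₀ (mul_nonneg (exp_pos _).le (divisorProfile_nonneg n c))
            (exp_neg_abs_sub_mul_divisorProfile_le n u c) 4

lemma profileNorm_pos {n : ℕ} (hn : n ≠ 0) : 0 < profileNorm n :=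
  (sum_pos (fun _ _ => exp_pos _) (Nat.nonempty_divisors.2 hn)).trans_le
    (divisorProfile_le_profileNorm n 0)

lemma sum_divisors_mul_of_coprime {m n : ℕ} (h : m.Coprime n) (f : ℕ → ℝ) :
    ∑ d ∈ (m * n).divisors, f d = ∑ e ∈ n.divisors, ∑ d ∈ m.divisors, f (d * e) := by
  rw [Nat.divisors_mul, mul_def, sum_image h.mul_injOn_divisors, sum_product_right]

lemma divisorProfile_mul_of_coprime {m n : ℕ} (h : m.Coprime n) (u : ℝ) :
    divisorProfile (m * n) u = ∑ e ∈ n.divisors, divisorProfile m (u - log e) := by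
  unfold divisorProfile
  rw [sum_divisors_mul_of_coprime h]
  refine sum_congr rfl fun e he => sum_congr rfl fun d hd => ?_
  rw [Nat.cast_mul, log_mul (Nat.cast_ne_zero.2 (Nat.pos_of_mem_divisors hd).ne')
    (Nat.cast_ne_zero.2 (Nat.pos_of_mem_divisors he).ne')]
  ring_nf

lemma profileNorm_mul_le_of_coprime {m n : ℕ} (h : m.Coprime n) :
    profileNorm (m * n) ≤ #n.divisors * profileNorm m := by
  refine le_of_pow_le_pow_left₀ four_ne_zero
    (mul_nonneg (Nat.cast_nonneg _) (profileNorm_nonneg m)) ?_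
  simp_rw [mul_pow, profileNorm_pow_four, divisorProfile_mul_of_coprime h]
  have hpow : ∫ u, (∑ e ∈ n.divisors, divisorProfile m (u - log e)) ^ 4 ≤
      (#n.divisors : ℝ) ^ 4 * ∫ u, divisorProfile m u ^ 4 :=
    integral_pow_sum_shift_le n.divisors _ (divisorProfile_nonneg m)
      (integrable_divisorProfile_pow m 3)
  linarith

lemma profileNorm_le_card_divisors (n : ℕ) : profileNorm n ≤ #n.divisors := by
  simpa [profileNorm_one] using profileNorm_mul_le_of_coprime (Nat.coprime_one_left n)

lemma add_pow_four_le {a b : ℝ} (ha : 0 ≤ a) (hb : 0 ≤ b) :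
    (a + b) ^ 4 ≤ a ^ 4 + b ^ 4 + 7 * (a ^ 3 * b + b ^ 3 * a) := by
  nlinarith [mul_nonneg (mul_nonneg ha hb) (sq_nonneg (a - b))]

lemma profileNorm_mul_prime_pow_four_le {m p : ℕ} (hp : p.Prime) (hpm : ¬p ∣ m) :
    profileNorm (m * p) ^ 4 ≤ 2 * profileNorm m ^ 4 + 14 * ∫ u, divisorProfile m u ^ 3 *
      (divisorProfile m (u - log p) + divisorProfile m (u + log p)) := by
  set F := divisorProfile m
  set ℓ := log p
  have hF : ∀ u, 0 ≤ F u := divisorProfile_nonneg m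
  have hprofile (u : ℝ) : divisorProfile (m * p) u = F u + F (u - ℓ) := by
    rw [divisorProfile_mul_of_coprime ((hp.coprime_iff_not_dvd.2 hpm).symm),
      Nat.Prime.sum_divisors hp, Nat.cast_one, log_one, sub_zero, add_comm]
  have hpow : Integrable fun u => F u ^ 4 := integrable_divisorProfile_pow m 3
  have hsub : Integrable fun u => F u ^ 3 * F (u - ℓ) :=
    integrable_divisorProfile_pow_mul_shift m 2 ℓ
  have hadd : Integrable fun u => F u ^ 3 * F (u + ℓ) := by
    simpa using integrable_divisorProfile_pow_mul_shift m 2 (-ℓ)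
  have hpow' := hpow.comp_sub_right ℓ
  have hadd' : Integrable fun u => F (u - ℓ) ^ 3 * F u := by
    simpa using hadd.comp_sub_right ℓ
  have hpows : Integrable fun u => F u ^ 4 + F (u - ℓ) ^ 4 := hpow.add hpow'
  have hcross : Integrable fun u => 7 * (F u ^ 3 * F (u - ℓ) + F (u - ℓ) ^ 3 * F u) :=
    (hsub.add hadd').const_mul 7
  have hshift : ∫ u, F (u - ℓ) ^ 3 * F u = ∫ u, F u ^ 3 * F (u + ℓ) := by
    simpa using integral_sub_right_eq_self (fun u => F u ^ 3 * F (u + ℓ)) ℓ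
  have hquartic : ∫ u, divisorProfile (m * p) u ^ 4 ≤ ∫ u, (F u ^ 4 + F (u - ℓ) ^ 4 +
      7 * (F u ^ 3 * F (u - ℓ) + F (u - ℓ) ^ 3 * F u)) := by
    refine integral_mono (integrable_divisorProfile_pow (m * p) 3) (hpows.add hcross) fun u => ?_
    simp only [hprofile]
    exact add_pow_four_le (hF u) (hF _)
  rw [integral_add hpows hcross, integral_add hpow hpow', integral_const_mul,
    integral_add hsub hadd', hshift, integral_sub_right_eq_self (fun u => F u ^ 4)] at hquartic
  simp_rw [profileNorm_pow_four, mul_add]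
  rw [integral_add hsub hadd]
  linarith

lemma sum_primesLE_log_div_mul_divisorProfile_le (m N : ℕ) (u : ℝ) :
    ∑ p ∈ Nat.primesLE N, log p / p *
        (divisorProfile m (u - log p) + divisorProfile m (u + log p)) ≤
      4 * log 4 * #m.divisors := by
  unfold divisorProfile
  simp_rw [← sum_add_distrib, mul_sum]
  rw [sum_comm, mul_comm, ← nsmul_eq_mul]
  refine sum_le_card_nsmul _ _ _ fun d _ => ?_
  calc ∑ p ∈ Nat.primesLE N,
          log p / p * (exp (-|u - log p - log d|) + exp (-|u + log p - log d|))
      = ∑ p ∈ Nat.primesLE N, log p / p * exp (-|u - log d - log p|) +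
          ∑ p ∈ Nat.primesLE N, log p / p * exp (-|log d - u - log p|) := by
        rw [← sum_add_distrib]
        refine sum_congr rfl fun p _ => ?_
        rw [mul_add, sub_right_comm, ← abs_neg (u + log p - log d)]
        ring_nf
    _ ≤ 4 * log 4 := by
        linarith [sum_log_div_mul_exp_primesLE_le N (u - log d),
          sum_log_div_mul_exp_primesLE_le N (log d - u)]

lemma sum_primesLE_log_div_mul_integral_divisorProfile_le (m N : ℕ) :
    ∑ p ∈ Nat.primesLE N, log p / p * ∫ u, divisorProfile m u ^ 3 *
        (divisorProfile m (u - log p) + divisorProfile m (u + log p)) ≤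
      4 * log 4 * #m.divisors * ∫ u, divisorProfile m u ^ 3 := by
  have hint (p : ℕ) : Integrable fun u => divisorProfile m u ^ 3 *
      (divisorProfile m (u - log p) + divisorProfile m (u + log p)) := by
    simp_rw [mul_add]
    refine (integrable_divisorProfile_pow_mul_shift m 2 (log p)).add ?_
    simpa using integrable_divisorProfile_pow_mul_shift m 2 (-log p)
  simp_rw [← integral_const_mul]
  rw [← integral_finsetSum _ fun p _ => (hint p).const_mul _]
  refine integral_mono (integrable_finsetSum _ fun p _ => (hint p).const_mul _)
    ((integrable_divisorProfile_pow m 2).const_mul _) fun u => ?_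
  simp_rw [mul_left_comm _ (divisorProfile m u ^ 3), ← mul_sum]
  rw [mul_comm]
  exact mul_le_mul_of_nonneg_right (sum_primesLE_log_div_mul_divisorProfile_le m N u)
    (pow_nonneg (divisorProfile_nonneg m u) 3)

lemma sum_primesLE_mul_profileNorm_pow_four_le (m N : ℕ) {σ : ℝ} (hσ : 0 < σ) :
    ∑ p ∈ Nat.primesLE N with ¬p ∣ m,
        log p * (p : ℝ) ^ (-(1 + σ)) * profileNorm (m * p) ^ 4 ≤
      2 * (1 / σ + log 4) * profileNorm m ^ 4 +
        56 * log 4 * (#m.divisors * ∫ u, divisorProfile m u ^ 3) := by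
  set C : ℕ → ℝ := fun p => ∫ u, divisorProfile m u ^ 3 *
    (divisorProfile m (u - log p) + divisorProfile m (u + log p))
  have hC0 (p : ℕ) : 0 ≤ C p := integral_nonneg fun u =>
    mul_nonneg (pow_nonneg (divisorProfile_nonneg m u) 3)
      (add_nonneg (divisorProfile_nonneg m _) (divisorProfile_nonneg m _))
  have hterm : ∀ p ∈ Nat.primesLE N, log p * (p : ℝ) ^ (-(1 + σ)) * C p ≤ log p / p * C p := by
    intro p hp
    have hp1 : (1 : ℝ) ≤ p := Nat.one_le_cast.2 (Nat.mem_primesLE.1 hp).2.one_le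
    rw [div_eq_mul_one_div]
    have := log_nonneg hp1
    gcongr
    exacts [hC0 p, rpow_neg_one_add_le_one_div hp1 hσ.le]
  calc ∑ p ∈ Nat.primesLE N with ¬p ∣ m,
          log p * (p : ℝ) ^ (-(1 + σ)) * profileNorm (m * p) ^ 4
      ≤ ∑ p ∈ Nat.primesLE N with ¬p ∣ m,
          log p * (p : ℝ) ^ (-(1 + σ)) * (2 * profileNorm m ^ 4 + 14 * C p) := by
        gcongr with p hp
        obtain ⟨hpN, hpm⟩ := mem_filter.1 hp
        exact profileNorm_mul_prime_pow_four_le (Nat.mem_primesLE.1 hpN).2 hpm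
    _ ≤ ∑ p ∈ Nat.primesLE N,
          log p * (p : ℝ) ^ (-(1 + σ)) * (2 * profileNorm m ^ 4 + 14 * C p) :=
        sum_le_sum_of_subset_of_nonneg (filter_subset _ _) fun p _ _ => by
          have := hC0 p
          positivity
    _ = 2 * profileNorm m ^ 4 * ∑ p ∈ Nat.primesLE N, log p * (p : ℝ) ^ (-(1 + σ)) +
          14 * ∑ p ∈ Nat.primesLE N, log p * (p : ℝ) ^ (-(1 + σ)) * C p := by
        rw [mul_sum, mul_sum, ← sum_add_distrib]
        exact sum_congr rfl fun p _ => by ring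
    _ ≤ 2 * profileNorm m ^ 4 * (1 / σ + log 4) +
          14 * (4 * log 4 * #m.divisors * ∫ u, divisorProfile m u ^ 3) := by
        gcongr
        · exact sum_log_mul_rpow_primesLE_le N hσ
        · exact (sum_le_sum hterm).trans (sum_primesLE_log_div_mul_integral_divisorProfile_le m N)
    _ = _ := by ring

lemma sum_mul_le_of_sum_mul_pow_le {ι : Type*} (s : Finset ι) {w f : ι → ℝ} {P l : ℝ} {k : ℕ}
    (hk : k ≠ 0) (hw : ∀ i, 0 ≤ w i) (hf : ∀ i, 0 ≤ f i) (hl : 0 ≤ l) (hP : ∑ i ∈ s, w i ≤ P)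
    (h : ∑ i ∈ s, w i * f i ^ k ≤ P * l ^ k) : ∑ i ∈ s, w i * f i ≤ P * l := by
  have hk1 : (1 : ℝ) ≤ k := Nat.one_le_cast.2 (Nat.one_le_iff_ne_zero.2 hk)
  have hsum : 0 ≤ ∑ i ∈ s, w i := sum_nonneg fun i _ => hw i
  have hP0 : 0 ≤ P := hsum.trans hP
  have hexp : 0 ≤ 1 - (k : ℝ)⁻¹ := sub_nonneg.2 (inv_le_one_of_one_le₀ hk1)
  calc ∑ i ∈ s, w i * f i
      ≤ (∑ i ∈ s, w i) ^ (1 - (k : ℝ)⁻¹) * (∑ i ∈ s, w i * f i ^ (k : ℝ)) ^ (k : ℝ)⁻¹ :=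
        inner_le_weight_mul_Lp_of_nonneg s hk1 w f hw hf
    _ ≤ P ^ (1 - (k : ℝ)⁻¹) * (P * l ^ k) ^ (k : ℝ)⁻¹ := by
        simp_rw [rpow_natCast]
        have := sum_nonneg fun i (_ : i ∈ s) => mul_nonneg (hw i) (pow_nonneg (hf i) k)
        gcongr
    _ = P * l := by
        rw [mul_rpow hP0 (by positivity), pow_rpow_inv_natCast hl hk, ← mul_assoc,
          ← rpow_add_of_nonneg hP0 hexp (by positivity), sub_add_cancel, rpow_one]

lemma card_divisors_mul_integral_divisorProfile_pow_three_le {m : ℕ} (hm : m ≠ 0) {ρ : ℝ}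
    (hρ : 0 < ρ) :
    3 * ρ ^ 4 * (#m.divisors * ∫ u, divisorProfile m u ^ 3) ≤
      25 / 8 * (ρ ^ 3 * #m.divisors) ^ 2 * profileNorm m ^ 2 +
        4 / 5 * (ρ ^ 3 * #m.divisors) * profileNorm m ^ 3 := by
  have ha := profileNorm_pos hm
  have hcube := three_mul_integral_pow_three_le (divisorProfile_nonneg m)
    (integrable_divisorProfile m) (integrable_divisorProfile_pow m 3)
    (ν := 4 / 5 / (ρ * profileNorm m)) (by positivity)
  rw [integral_divisorProfile, mul_right_comm 2, ← profileNorm_pow_four] at hcube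
  calc 3 * ρ ^ 4 * (#m.divisors * ∫ u, divisorProfile m u ^ 3)
      = ρ ^ 4 * #m.divisors * (3 * ∫ u, divisorProfile m u ^ 3) := by ring
    _ ≤ _ := mul_le_mul_of_nonneg_left hcube (by positivity)
    _ = _ := by
        field_simp
        ring

lemma two_mul_pow_four_add_le {a s : ℝ} (ha : 0 ≤ a) (hs : 0 ≤ s) :
    2 * a ^ 4 + 56 / 3 * log 4 * (25 / 8 * s ^ 2 * a ^ 2 + 4 / 5 * s * a ^ 3) ≤
      (1.19 * a + 3.2 * s) ^ 4 := by
  have hlog : log 4 ≤ 1.3863 := by linarith [log_four_eq, log_two_lt_d9]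
  have h4 : 0 ≤ a ^ 4 := by positivity
  have h3 : 0 ≤ s * a ^ 3 := by positivity
  have h2 : 0 ≤ s ^ 2 * a ^ 2 := by positivity
  have h1 : 0 ≤ s ^ 3 * a := by positivity
  have h0 : 0 ≤ s ^ 4 := by positivity
  calc 2 * a ^ 4 + 56 / 3 * log 4 * (25 / 8 * s ^ 2 * a ^ 2 + 4 / 5 * s * a ^ 3)
      ≤ 2 * a ^ 4 + 56 / 3 * 1.3863 * (25 / 8 * s ^ 2 * a ^ 2 + 4 / 5 * s * a ^ 3) := by gcongr
    _ ≤ (1.19 * a + 3.2 * s) ^ 4 := by linarith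

lemma sum_primesLE_mul_profileNorm_le {m : ℕ} (hm : m ≠ 0) (N : ℕ) {σ : ℝ} (hσ : 0 < σ) :
    ∑ p ∈ Nat.primesLE N with ¬p ∣ m, log p * (p : ℝ) ^ (-(1 + σ)) * profileNorm (m * p) ≤
      (1 / σ + log 4) * (1.19 * profileNorm m + 3.2 * (σ ^ (3 / 4 : ℝ) * #m.divisors)) := by
  set a := profileNorm m
  set s := σ ^ (3 / 4 : ℝ) * #m.divisors
  set J := #m.divisors * ∫ u, divisorProfile m u ^ 3
  have ha : 0 ≤ a := profileNorm_nonneg m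
  have hs0 : 0 ≤ s := by positivity
  have hlog4 : 0 ≤ log 4 := log_nonneg (by norm_num)
  have hw (p : ℕ) : 0 ≤ log p * (p : ℝ) ^ (-(1 + σ)) :=
    mul_nonneg (log_natCast_nonneg p) (by positivity)
  refine sum_mul_le_of_sum_mul_pow_le _ four_ne_zero hw (fun p => profileNorm_nonneg _)
    (by positivity) ((sum_le_sum_of_subset_of_nonneg (filter_subset _ _) fun p _ _ => hw p).trans
      (sum_log_mul_rpow_primesLE_le N hσ)) ?_
  have hJ : 3 * σ * J ≤ 25 / 8 * s ^ 2 * a ^ 2 + 4 / 5 * s * a ^ 3 := by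
    have hρ := card_divisors_mul_integral_divisorProfile_pow_three_le hm
      (rpow_pos_of_pos hσ (1 / 4))
    have hpow_four : (σ ^ (1 / 4 : ℝ)) ^ 4 = σ := by
      rw [← rpow_mul_natCast hσ.le, Nat.cast_ofNat, one_div_mul_cancel four_ne_zero, rpow_one]
    have hpow_three : (σ ^ (1 / 4 : ℝ)) ^ 3 = σ ^ (3 / 4 : ℝ) := by
      rw [← rpow_mul_natCast hσ.le, Nat.cast_ofNat, one_div_mul_eq_div]
    rwa [hpow_four, hpow_three] at hρ
  set B := 25 / 8 * s ^ 2 * a ^ 2 + 4 / 5 * s * a ^ 3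
  have hB : 0 ≤ B := by positivity
  calc ∑ p ∈ Nat.primesLE N with ¬p ∣ m, log p * (p : ℝ) ^ (-(1 + σ)) * profileNorm (m * p) ^ 4
      ≤ 2 * (1 / σ + log 4) * a ^ 4 + 56 * log 4 * J :=
        sum_primesLE_mul_profileNorm_pow_four_le m N hσ
    _ = 2 * (1 / σ + log 4) * a ^ 4 + 56 / 3 * log 4 * (1 / σ * (3 * σ * J)) := by
        field_simp
    _ ≤ 2 * (1 / σ + log 4) * a ^ 4 + 56 / 3 * log 4 * (1 / σ * B) := by gcongr
    _ ≤ 2 * (1 / σ + log 4) * a ^ 4 + 56 / 3 * log 4 * ((1 / σ + log 4) * B) := by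
        gcongr
        linarith
    _ = (1 / σ + log 4) * (2 * a ^ 4 + 56 / 3 * log 4 * B) := by ring
    _ ≤ (1 / σ + log 4) * (1.19 * a + 3.2 * s) ^ 4 := by
        gcongr
        exact two_mul_pow_four_add_le ha hs0

/-! ### Extracting a prime power -/

lemma factorization_mul_prime_pow {m p : ℕ} (hp : p.Prime) (hpm : ¬p ∣ m) (k : ℕ) :
    (m * p ^ k).factorization p = k := by
  have hm : m ≠ 0 := fun h => hpm (h ▸ dvd_zero p)
  simp [Nat.factorization_mul hm (pow_ne_zero k hp.ne_zero),
    Nat.factorization_eq_zero_of_not_dvd hpm, hp.factorization_self]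

lemma sum_mul_log_eq_sum_mul_prime_pow (g : ℕ → ℝ) (N : ℕ) :
    ∑ n ∈ Icc 1 N, g n * log n =
      ∑ m ∈ Icc 1 N, ∑ p ∈ Nat.primesLE N with ¬p ∣ m, ∑ k ∈ Icc 1 N with m * p ^ k ≤ N,
        g (m * p ^ k) * (k * log p) := by
  have hlog (n : ℕ) : g n * log n =
      ∑ p ∈ n.primeFactors, g n * (n.factorization p * log p) := by
    rw [log_nat_eq_sum_factorization, Finsupp.sum, mul_sum, Nat.support_factorization]
  simp_rw [hlog, sum_sigma']
  refine sum_bij' (fun x _ => ⟨x.1 / x.2 ^ x.1.factorization x.2, x.2, x.1.factorization x.2⟩)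
    (fun y _ => ⟨y.1 * y.2.1 ^ y.2.2, y.2.1⟩) ?_ ?_ ?_ ?_ ?_
  · rintro ⟨n, p⟩ hx
    simp only [mem_sigma, mem_Icc, Nat.mem_primeFactors] at hx
    obtain ⟨⟨hn, hnN⟩, hp, hpn, hn0⟩ := hx
    simp only [mem_sigma, mem_Icc, mem_filter, Nat.mem_primesLE]
    refine ⟨⟨Nat.ordCompl_pos p hn0, (Nat.div_le_self _ _).trans hnN⟩,
      ⟨⟨(Nat.le_of_dvd hn hpn).trans hnN, hp⟩, Nat.not_dvd_ordCompl hp hn0⟩,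
      ⟨hp.factorization_pos_of_dvd hn0 hpn, (Nat.factorization_lt p hn0).le.trans hnN⟩, ?_⟩
    rwa [Nat.div_mul_cancel (Nat.ordProj_dvd n p)]
  · rintro ⟨m, p, k⟩ hy
    simp only [mem_sigma, mem_Icc, mem_filter, Nat.mem_primesLE] at hy
    obtain ⟨⟨hm, -⟩, ⟨⟨-, hp⟩, -⟩, ⟨hk, -⟩, hmk⟩ := hy
    have hpos : 0 < m * p ^ k := Nat.mul_pos hm (pow_pos hp.pos k)
    exact mem_sigma.2 ⟨mem_Icc.2 ⟨hpos, hmk⟩, Nat.mem_primeFactors.2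
      ⟨hp, (dvd_pow_self p (Nat.one_le_iff_ne_zero.1 hk)).mul_left m, hpos.ne'⟩⟩
  · rintro ⟨n, p⟩ -
    simp [Nat.div_mul_cancel (Nat.ordProj_dvd n p)]
  · rintro ⟨m, p, k⟩ hy
    simp only [mem_sigma, mem_Icc, mem_filter, Nat.mem_primesLE] at hy
    obtain ⟨-, ⟨⟨-, hp⟩, hpm⟩, -⟩ := hy
    simp [factorization_mul_prime_pow hp hpm, hp.ne_zero]
  · rintro ⟨n, p⟩ -
    simp only [Nat.div_mul_cancel (Nat.ordProj_dvd n p)]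

lemma sum_mul_log_le_sum_mul_prime {g c : ℕ → ℝ} (N : ℕ) (hc : ∀ m, 0 ≤ c m)
    (hgc : ∀ m p k : ℕ, p.Prime → ¬p ∣ m → 1 < k → m * p ^ k ≤ N →
      g (m * p ^ k) ≤ c m * (k + 1) / (p : ℝ) ^ k) :
    ∑ n ∈ Icc 1 N, g n * log n ≤
      ∑ m ∈ Icc 1 N, (∑ p ∈ Nat.primesLE N with ¬p ∣ m ∧ m * p ≤ N, g (m * p) * log p +
        28 * c m) := by
  rw [sum_mul_log_eq_sum_mul_prime_pow]
  refine sum_le_sum fun m hm => ?_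
  obtain ⟨hm1, hmN⟩ := mem_Icc.1 hm
  set a : ℕ → ℕ → ℝ := fun p k => if ¬p ∣ m ∧ m * p ^ k ≤ N then g (m * p ^ k) else 0
  have ha : ∀ p ∈ Nat.primesLE N, ∀ k ∈ Ioc 1 N, a p k ≤ c m * (k + 1) / (p : ℝ) ^ k := by
    intro p hp k hk
    have := hc m
    unfold a
    split_ifs with h
    · exact hgc m p k (Nat.mem_primesLE.1 hp).2 h.1 (mem_Ioc.1 hk).1 h.2
    · positivity
  calc ∑ p ∈ Nat.primesLE N with ¬p ∣ m, ∑ k ∈ Icc 1 N with m * p ^ k ≤ N,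
          g (m * p ^ k) * (k * log p)
      = ∑ p ∈ Nat.primesLE N, ∑ k ∈ Icc 1 N, a p k * (k * log p) := by
        simp only [a, sum_filter, ite_and, ite_mul, zero_mul]
        refine sum_congr rfl fun p _ => ?_
        split_ifs <;> simp
    _ = ∑ p ∈ Nat.primesLE N, a p 1 * log p +
          ∑ p ∈ Nat.primesLE N, ∑ k ∈ Ioc 1 N, a p k * (k * log p) := by
        simp_rw [Icc_eq_cons_Ioc (hm1.trans hmN), sum_cons, sum_add_distrib, Nat.cast_one, one_mul]
    _ ≤ ∑ p ∈ Nat.primesLE N, a p 1 * log p + 28 * c m := by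
        gcongr
        exact sum_primesLE_sum_Ioc_one_mul_log_le (hc m) N N ha
    _ = _ := by simp only [a, pow_one, sum_filter, ite_mul, zero_mul]

/-- The weight `t ^ ω(n)` times the profile norm of `n`: the coefficient of the Dirichlet series
that the differential inequality bounds. -/
noncomputable def weightedNorm (t : ℝ) (n : ℕ) : ℝ :=
  t ^ #n.primeFactors * profileNorm n

lemma weightedNorm_nonneg {t : ℝ} (ht : 0 ≤ t) (n : ℕ) : 0 ≤ weightedNorm t n :=
  mul_nonneg (pow_nonneg ht _) (profileNorm_nonneg n)

lemma card_primeFactors_mul_prime_pow {m p k : ℕ} (hp : p.Prime) (hpm : ¬p ∣ m) (hk : k ≠ 0) :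
    #(m * p ^ k).primeFactors = #m.primeFactors + 1 := by
  have hcop : m.Coprime (p ^ k) := (hp.coprime_iff_not_dvd.2 hpm).symm.pow_right k
  rw [hcop.primeFactors_mul, card_union_of_disjoint hcop.disjoint_primeFactors,
    Nat.primeFactors_prime_pow hk hp, card_singleton]

lemma weightedNorm_mul_prime_pow_le {t : ℝ} (ht : 0 ≤ t) {m p k : ℕ} (hp : p.Prime)
    (hpm : ¬p ∣ m) (hk : k ≠ 0) :
    weightedNorm t (m * p ^ k) ≤ t * weightedNorm t m * (k + 1) := by
  have hnorm := profileNorm_mul_le_of_coprime ((hp.coprime_iff_not_dvd.2 hpm).symm.pow_right k)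
  rw [Nat.divisors_prime_pow hp, card_map, card_range] at hnorm
  push_cast at hnorm
  calc weightedNorm t (m * p ^ k)
      = t ^ (#m.primeFactors + 1) * profileNorm (m * p ^ k) := by
        rw [weightedNorm, card_primeFactors_mul_prime_pow hp hpm hk]
    _ ≤ t ^ (#m.primeFactors + 1) * ((k + 1) * profileNorm m) := by gcongr
    _ = t * weightedNorm t m * (k + 1) := by
        rw [weightedNorm]
        ring

lemma sum_primesLE_weightedNorm_mul_le {t : ℝ} (ht : 0 ≤ t) {m : ℕ} (hm : m ≠ 0) (N : ℕ)
    {σ : ℝ} (hσ : 0 < σ) :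
    ∑ p ∈ Nat.primesLE N with ¬p ∣ m ∧ m * p ≤ N,
        weightedNorm t (m * p) * ((m * p : ℕ) : ℝ) ^ (-(1 + σ)) * log p ≤
      t ^ (#m.primeFactors + 1) * (m : ℝ) ^ (-(1 + σ)) * ((1 / σ + log 4) *
        (1.19 * profileNorm m + 3.2 * (σ ^ (3 / 4 : ℝ) * #m.divisors))) := by
  calc ∑ p ∈ Nat.primesLE N with ¬p ∣ m ∧ m * p ≤ N,
          weightedNorm t (m * p) * ((m * p : ℕ) : ℝ) ^ (-(1 + σ)) * log p
      ≤ ∑ p ∈ Nat.primesLE N with ¬p ∣ m,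
          weightedNorm t (m * p) * ((m * p : ℕ) : ℝ) ^ (-(1 + σ)) * log p := by
        refine sum_le_sum_of_subset_of_nonneg
          (monotone_filter_right _ fun p _ => And.left) fun p _ _ => ?_
        have := weightedNorm_nonneg ht (m * p)
        have := log_natCast_nonneg p
        positivity
    _ = t ^ (#m.primeFactors + 1) * (m : ℝ) ^ (-(1 + σ)) *
          ∑ p ∈ Nat.primesLE N with ¬p ∣ m,
            log p * (p : ℝ) ^ (-(1 + σ)) * profileNorm (m * p) := by
        rw [mul_sum]
        refine sum_congr rfl fun p hp => ?_
        obtain ⟨hpN, hpm⟩ := mem_filter.1 hp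
        have homega := card_primeFactors_mul_prime_pow (Nat.mem_primesLE.1 hpN).2 hpm one_ne_zero
        rw [pow_one] at homega
        rw [weightedNorm, homega, Nat.cast_mul, mul_rpow m.cast_nonneg p.cast_nonneg]
        ring
    _ ≤ _ := by
        gcongr
        exact sum_primesLE_mul_profileNorm_le hm N hσ

lemma sum_weightedNorm_mul_rpow_mul_log_le {t : ℝ} (ht : 0 ≤ t) {σ : ℝ} (hσ : 0 < σ) (N : ℕ) :
    ∑ n ∈ Icc 1 N, weightedNorm t n * (n : ℝ) ^ (-(1 + σ)) * log n ≤
      t * ((1 / σ + log 4) *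
        (1.19 * (∑ n ∈ Icc 1 N, weightedNorm t n * (n : ℝ) ^ (-(1 + σ))) +
          3.2 * (σ ^ (3 / 4 : ℝ) * ∑ n ∈ Icc 1 N,
            t ^ #n.primeFactors * #n.divisors * (n : ℝ) ^ (-(1 + σ)))) +
        28 * ∑ n ∈ Icc 1 N, weightedNorm t n * (n : ℝ) ^ (-(1 + σ))) := by
  have hw := weightedNorm_nonneg ht
  have hpower : ∀ m p k : ℕ, p.Prime → ¬p ∣ m → 1 < k → m * p ^ k ≤ N →
      weightedNorm t (m * p ^ k) * ((m * p ^ k : ℕ) : ℝ) ^ (-(1 + σ)) ≤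
        t * (weightedNorm t m * (m : ℝ) ^ (-(1 + σ))) * (k + 1) / (p : ℝ) ^ k := by
    intro m p k hp hpm hk _
    have hp1 : (1 : ℝ) ≤ (p : ℝ) ^ k := one_le_pow₀ (Nat.one_le_cast.2 hp.one_le)
    push_cast
    rw [mul_rpow (by positivity) (by positivity)]
    have := hw m
    calc weightedNorm t (m * p ^ k) * ((m : ℝ) ^ (-(1 + σ)) * ((p : ℝ) ^ k) ^ (-(1 + σ)))
        ≤ t * weightedNorm t m * (k + 1) * ((m : ℝ) ^ (-(1 + σ)) * (1 / (p : ℝ) ^ k)) := by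
          gcongr
          · exact weightedNorm_mul_prime_pow_le ht hp hpm (Nat.ne_zero_of_lt hk)
          · exact rpow_neg_one_add_le_one_div hp1 hσ.le
      _ = _ := by ring
  refine (sum_mul_log_le_sum_mul_prime N
    (fun m => mul_nonneg ht (mul_nonneg (hw m) (by positivity))) hpower).trans ?_
  calc ∑ m ∈ Icc 1 N, _
      ≤ ∑ m ∈ Icc 1 N, (t ^ (#m.primeFactors + 1) * (m : ℝ) ^ (-(1 + σ)) * ((1 / σ + log 4) *
          (1.19 * profileNorm m + 3.2 * (σ ^ (3 / 4 : ℝ) * #m.divisors))) +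
            28 * (t * (weightedNorm t m * (m : ℝ) ^ (-(1 + σ))))) := by
        gcongr with m hm
        exact sum_primesLE_weightedNorm_mul_le ht (Nat.one_le_iff_ne_zero.1 (mem_Icc.1 hm).1) N hσ
    _ = _ := by
        simp only [mul_sum, ← sum_add_distrib]
        refine sum_congr rfl fun m _ => ?_
        rw [weightedNorm]
        ring

lemma sum_primesLE_mul_log_le {g : ℕ → ℝ} {m : ℕ} (hm : m ≠ 0) (N : ℕ) {C : ℝ} (hC : 0 ≤ C)
    (hg : ∀ p : ℕ, p.Prime → ¬p ∣ m → g (m * p) ≤ C) :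
    ∑ p ∈ Nat.primesLE N with ¬p ∣ m ∧ m * p ≤ N, g (m * p) * log p ≤ C * (log 4 * (N / m)) := by
  have : 0 ≤ log 4 := log_nonneg (by norm_num)
  have hsubset : {p ∈ Nat.primesLE N | ¬p ∣ m ∧ m * p ≤ N} ⊆ Nat.primesLE (N / m) := by
    intro p hp
    simp only [mem_filter, Nat.mem_primesLE] at hp ⊢
    exact ⟨(Nat.le_div_iff_mul_le (Nat.pos_of_ne_zero hm)).2 (mul_comm m p ▸ hp.2.2), hp.1.2⟩
  calc ∑ p ∈ Nat.primesLE N with ¬p ∣ m ∧ m * p ≤ N, g (m * p) * log p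
      ≤ ∑ p ∈ Nat.primesLE N with ¬p ∣ m ∧ m * p ≤ N, C * log p := by
        gcongr with p hp
        obtain ⟨hpN, hpm, -⟩ := mem_filter.1 hp
        exact hg p (Nat.mem_primesLE.1 hpN).2 hpm
    _ ≤ ∑ p ∈ Nat.primesLE (N / m), C * log p :=
        sum_le_sum_of_subset_of_nonneg hsubset fun p _ _ => mul_nonneg hC (log_natCast_nonneg p)
    _ = C * ∑ p ∈ Nat.primesLE (N / m), log p := (mul_sum ..).symm
    _ ≤ C * (log 4 * (N / m)) := by
        gcongr
        exact (sum_log_primesLE_le (N / m)).trans (by gcongr; exact Nat.cast_div_le)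

lemma sum_mul_log_le_mul_sum_div {g : ℕ → ℝ} (hg0 : ∀ n, 0 ≤ g n)
    (hg : ∀ m p k : ℕ, p.Prime → ¬p ∣ m → k ≠ 0 → g (m * p ^ k) ≤ g m * (k + 1)) (N : ℕ) :
    ∑ n ∈ Icc 1 N, g n * log n ≤ (2 * log 4 + 28) * N * ∑ n ∈ Icc 1 N, g n / n := by
  have hpower : ∀ m p k : ℕ, p.Prime → ¬p ∣ m → 1 < k → m * p ^ k ≤ N →
      g (m * p ^ k) ≤ N * (g m / m) * (k + 1) / (p : ℝ) ^ k := by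
    intro m p k hp hpm hk hN
    have hgm := hg0 m
    have hm0 : (0 : ℝ) < m := Nat.cast_pos.2 (Nat.pos_of_ne_zero fun h => hpm (h ▸ dvd_zero p))
    have hp0 : (0 : ℝ) < p := Nat.cast_pos.2 hp.pos
    have hratio : 1 ≤ N / (m * (p : ℝ) ^ k) := by
      rw [one_le_div (by positivity)]
      exact_mod_cast hN
    calc g (m * p ^ k) ≤ g m * (k + 1) := hg m p k hp hpm (Nat.ne_zero_of_lt hk)
      _ ≤ N / (m * (p : ℝ) ^ k) * (g m * (k + 1)) :=
          le_mul_of_one_le_left (by positivity) hratio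
      _ = N * (g m / m) * (k + 1) / (p : ℝ) ^ k := by field_simp
  have hprime (m p : ℕ) (hp : p.Prime) (hpm : ¬p ∣ m) : g (m * p) ≤ g m * 2 := by
    simpa [one_add_one_eq_two] using hg m p 1 hp hpm one_ne_zero
  refine (sum_mul_log_le_sum_mul_prime N
    (fun m => mul_nonneg N.cast_nonneg (div_nonneg (hg0 m) m.cast_nonneg)) hpower).trans ?_
  rw [mul_sum]
  refine sum_le_sum fun m hm => ?_
  have hm0 := Nat.one_le_iff_ne_zero.1 (mem_Icc.1 hm).1
  calc _ ≤ g m * 2 * (log 4 * (N / m)) + 28 * (N * (g m / m)) := by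
        gcongr
        exact sum_primesLE_mul_log_le hm0 N (mul_nonneg (hg0 m) zero_le_two) (hprime m)
    _ = _ := by ring

/-! ### A differential inequality -/

lemma hasDerivAt_sum_mul_rpow_neg_one_add (w : ℕ → ℝ) (N : ℕ) (s : ℝ) :
    HasDerivAt (fun s => ∑ n ∈ Icc 1 N, w n * (n : ℝ) ^ (-(1 + s)))
      (-∑ n ∈ Icc 1 N, w n * (n : ℝ) ^ (-(1 + s)) * log n) s := by
  rw [← sum_neg_distrib]
  refine HasDerivAt.fun_sum fun n hn => ?_
  have hn0 : (0 : ℝ) < n := Nat.cast_pos.2 (mem_Icc.1 hn).1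
  have hexponent : HasDerivAt (fun s : ℝ => -(1 + s)) (-1) s :=
    ((hasDerivAt_id s).const_add 1).neg
  exact ((hexponent.const_rpow hn0).const_mul (w n)).congr_deriv (by ring)

-- `s ^ α * exp (β * s)` is an integrating factor of `-dL/ds ≤ (α / s + β) L + κ s ^ (-γ - 1)`.
lemma rpow_mul_exp_mul_sub_monotoneOn {L D : ℝ → ℝ} {α β γ κ A c : ℝ} (hβ : 0 ≤ β) (hκ : 0 ≤ κ)
    (hL : ∀ s ∈ Set.Ioc 0 c, HasDerivAt L (-D s) s)
    (hD : ∀ s ∈ Set.Ioc 0 c, D s ≤ (α / s + β) * L s + κ * s ^ (-γ - 1))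
    (hA : κ * exp (β * c) ≤ A * (γ - α)) :
    MonotoneOn (fun s => s ^ α * exp (β * s) * L s - A * s ^ (α - γ)) (Set.Ioc 0 c) := by
  have hderiv : ∀ s ∈ Set.Ioc 0 c, HasDerivAt
      (fun s => s ^ α * exp (β * s) * L s - A * s ^ (α - γ))
      (s ^ α * exp (β * s) * ((α / s + β) * L s - D s) + A * (γ - α) * s ^ (α - γ - 1)) s := by
    intro s hs
    have hs0 : s ≠ 0 := hs.1.ne'
    have hexp : HasDerivAt (fun s => exp (β * s)) (exp (β * s) * β) s := by
      simpa using ((hasDerivAt_id s).const_mul β).exp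
    refine ((((hasDerivAt_rpow_const (.inl hs0)).fun_mul hexp).fun_mul (hL s hs)).fun_sub
      ((hasDerivAt_rpow_const (.inl hs0)).const_mul A)).congr_deriv ?_
    rw [rpow_sub_one hs0 α]
    ring
  refine monotoneOn_of_hasDerivWithinAt_nonneg (convex_Ioc 0 c)
    (fun s hs => (hderiv s hs).continuousAt.continuousWithinAt)
    (fun s hs => (hderiv s (interior_subset hs)).hasDerivWithinAt) fun s hs => ?_
  obtain ⟨hs0, hsc⟩ := interior_subset hs
  calc 0 ≤ (A * (γ - α) - κ * exp (β * c)) * s ^ (α - γ - 1) :=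
        mul_nonneg (sub_nonneg.2 hA) (rpow_nonneg hs0.le _)
    _ ≤ (A * (γ - α) - κ * exp (β * s)) * s ^ (α - γ - 1) := by gcongr
    _ = s ^ α * exp (β * s) * -(κ * s ^ (-γ - 1)) + A * (γ - α) * s ^ (α - γ - 1) := by
        rw [show α - γ - 1 = α + (-γ - 1) by ring, rpow_add hs0]
        ring
    _ ≤ _ := by
        gcongr
        linarith [hD s ⟨hs0, hsc⟩]

lemma le_mul_rpow_neg_of_deriv_le {L D : ℝ → ℝ} {α β γ κ A c : ℝ} (hβ : 0 ≤ β) (hκ : 0 ≤ κ)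
    (hL0 : ∀ s, 0 ≤ L s) (hL : ∀ s ∈ Set.Ioc 0 c, HasDerivAt L (-D s) s)
    (hD : ∀ s ∈ Set.Ioc 0 c, D s ≤ (α / s + β) * L s + κ * s ^ (-γ - 1))
    (hA : κ * exp (β * c) ≤ A * (γ - α)) (hLc : exp (β * c) * L c ≤ A * c ^ (-γ))
    {s : ℝ} (hs : s ∈ Set.Ioc 0 c) : L s ≤ A * s ^ (-γ) := by
  have hc : 0 < c := hs.1.trans_le hs.2
  have hfactor {r : ℝ} (hr : 0 < r) : r ^ α * exp (β * r) * L r - A * r ^ (α - γ) =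
      r ^ α * (exp (β * r) * L r - A * r ^ (-γ)) := by
    rw [sub_eq_add_neg α, rpow_add hr]
    ring
  have hmono : s ^ α * (exp (β * s) * L s - A * s ^ (-γ)) ≤
      c ^ α * (exp (β * c) * L c - A * c ^ (-γ)) := by
    rw [← hfactor hs.1, ← hfactor hc]
    exact rpow_mul_exp_mul_sub_monotoneOn hβ hκ hL hD hA hs ⟨hc, le_rfl⟩ hs.2
  have hneg : exp (β * s) * L s - A * s ^ (-γ) ≤ 0 :=
    nonpos_of_mul_nonpos_right (hmono.trans (mul_nonpos_of_nonneg_of_nonpos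
      (rpow_nonneg hc.le _) (sub_nonpos.2 hLc))) (rpow_pos_of_pos hs.1 α)
  have hexp : 1 ≤ exp (β * s) := one_le_exp (mul_nonneg hβ hs.1.le)
  exact (le_mul_of_one_le_left (hL0 s) hexp).trans (sub_nonpos.1 hneg)

lemma rpow_one_sub_mul_rpow_le {X Y M s b t : ℝ} (ht : t ∈ Set.Icc 0 1) (hs : 0 < s)
    (hX0 : 0 ≤ X) (hY0 : 0 ≤ Y) (hX : X ≤ M) (hY : Y * s ^ b ≤ M) :
    X ^ (1 - t) * Y ^ t ≤ M * s ^ (-(b * t)) := by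
  have hM : 0 ≤ M := hX0.trans hX
  have ht1 : 0 ≤ 1 - t := sub_nonneg.2 ht.2
  have hsb : 0 < s ^ b := rpow_pos_of_pos hs b
  calc X ^ (1 - t) * Y ^ t = X ^ (1 - t) * (Y * s ^ b) ^ t * s ^ (-(b * t)) := by
        rw [mul_rpow hY0 hsb.le, ← rpow_mul hs.le, rpow_neg hs.le]
        field_simp
    _ ≤ M ^ (1 - t) * M ^ t * s ^ (-(b * t)) := by
        gcongr
        exact ht.1
    _ = M * s ^ (-(b * t)) := by
        rw [← rpow_add_of_nonneg hM ht1 ht.1, sub_add_cancel, rpow_one]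

lemma one_add_one_div_sq_mul_rpow_le {s b : ℝ} (hs : 0 < s) (hs1 : s ≤ 1) (hb : 5 / 4 ≤ b) :
    (1 + 1 / s) ^ 2 * s ^ b ≤ (1 + s) ^ 2 * s ^ (-(3 / 4) : ℝ) := by
  calc (1 + 1 / s) ^ 2 * s ^ b ≤ (1 + 1 / s) ^ 2 * s ^ (5 / 4 : ℝ) := by
        gcongr (1 + 1 / s) ^ 2 * ?_
        exact rpow_le_rpow_of_exponent_ge hs hs1 hb
    _ = (1 + s) ^ 2 * s ^ (-(3 / 4) : ℝ) := by
        rw [show (5 / 4 : ℝ) = -(3 / 4) + (2 : ℕ) by norm_num, rpow_add_natCast hs.ne']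
        field_simp
        ring

lemma exp_two_lt : exp 2 < 8 := by
  rw [← one_add_one_eq_two, exp_add]
  nlinarith [exp_one_lt_d9, exp_pos 1]

/-! ### The main estimate -/

lemma rpow_mul_sum_pow_card_primeFactors_mul_card_divisors_le {t b σ : ℝ}
    (ht : t ∈ Set.Icc 0 1) (hb : 5 / 4 ≤ b) (hσ : 0 < σ) (hσ1 : σ ≤ 1 / 100) (N : ℕ) :
    σ ^ (3 / 4 : ℝ) * ∑ n ∈ Icc 1 N, t ^ #n.primeFactors * #n.divisors * (n : ℝ) ^ (-(1 + σ)) ≤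
      1.0201 * σ ^ (-(b * t)) := by
  have hrpow : σ ^ (3 / 4 : ℝ) ≤ 1 / 10 := by
    calc σ ^ (3 / 4 : ℝ) ≤ σ ^ (1 / 2 : ℝ) :=
          rpow_le_rpow_of_exponent_ge hσ (by linarith) (by norm_num)
      _ ≤ 1 / 10 := by
          rw [← sqrt_eq_rpow]
          exact sqrt_le_iff.2 ⟨by norm_num, by linarith⟩
  have hpos : 0 < σ ^ (3 / 4 : ℝ) := rpow_pos_of_pos hσ _
  have hX : exp 2 ≤ 1.0201 * σ ^ (-(3 / 4) : ℝ) := by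
    rw [rpow_neg hσ.le, ← div_eq_mul_inv, le_div_iff₀ hpos]
    nlinarith [exp_two_lt]
  have hY : (1 + 1 / σ) ^ 2 * σ ^ b ≤ 1.0201 * σ ^ (-(3 / 4) : ℝ) :=
    (one_add_one_div_sq_mul_rpow_le hσ (by linarith) hb).trans (by gcongr; nlinarith)
  calc _ ≤ σ ^ (3 / 4 : ℝ) * (1.0201 * σ ^ (-(3 / 4) : ℝ) * σ ^ (-(b * t))) := by
        gcongr
        exact (sum_pow_card_primeFactors_mul_card_divisors_le ht hσ N).trans
          (rpow_one_sub_mul_rpow_le ht hσ (exp_pos 2).le (by positivity) hX hY)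
    _ = 1.0201 * σ ^ (-(b * t)) := by
        rw [rpow_neg hσ.le (3 / 4)]
        field_simp

lemma sum_weightedNorm_mul_rpow_le_of_ge {t b σ : ℝ} (ht : t ∈ Set.Icc 0 1) (hb : 5 / 4 ≤ b)
    (hσ : 1 / 100 ≤ σ) (hσ1 : σ ≤ 1) (N : ℕ) :
    ∑ n ∈ Icc 1 N, weightedNorm t n * (n : ℝ) ^ (-(1 + σ)) ≤ 35 * σ ^ (-(b * t)) := by
  have hσ0 : 0 < σ := by linarith
  have hrpow : 1 ≤ 32 * σ ^ (3 / 4 : ℝ) := by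
    refine le_of_pow_le_pow_left₀ four_ne_zero (by positivity) ?_
    rw [mul_pow, ← rpow_mul_natCast hσ0.le]
    have hcube := pow_le_pow_left₀ (by norm_num) hσ 3
    rw [show (3 / 4 : ℝ) * (4 : ℕ) = (3 : ℕ) by norm_num, rpow_natCast]
    linarith
  have hσ34 : σ ≤ σ ^ (3 / 4 : ℝ) := by
    simpa using rpow_le_rpow_of_exponent_ge hσ0 hσ1 (by norm_num : (3 / 4 : ℝ) ≤ 1)
  have hY : (1 + 1 / σ) ^ 2 * σ ^ b ≤ 35 := by
    refine (one_add_one_div_sq_mul_rpow_le hσ0 hσ1 hb).trans ?_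
    rw [rpow_neg hσ0.le, ← div_eq_mul_inv, div_le_iff₀ (by positivity)]
    nlinarith
  calc ∑ n ∈ Icc 1 N, weightedNorm t n * (n : ℝ) ^ (-(1 + σ))
      ≤ ∑ n ∈ Icc 1 N, t ^ #n.primeFactors * #n.divisors * (n : ℝ) ^ (-(1 + σ)) := by
        have := ht.1
        unfold weightedNorm
        gcongr with n
        exact profileNorm_le_card_divisors n
    _ ≤ 35 * σ ^ (-(b * t)) :=
        (sum_pow_card_primeFactors_mul_card_divisors_le ht hσ0 N).trans
          (rpow_one_sub_mul_rpow_le ht hσ0 (exp_pos 2).le (by positivity)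
            (by linarith [exp_two_lt]) hY)

lemma sum_weightedNorm_mul_rpow_mul_log_le_of_le {t b σ : ℝ} (ht : t ∈ Set.Icc 0 1)
    (hb : 5 / 4 ≤ b) (hσ : 0 < σ) (hσ1 : σ ≤ 1 / 100) (N : ℕ) :
    ∑ n ∈ Icc 1 N, weightedNorm t n * (n : ℝ) ^ (-(1 + σ)) * log n ≤
      (1.19 * t / σ + 30 * t) * (∑ n ∈ Icc 1 N, weightedNorm t n * (n : ℝ) ^ (-(1 + σ))) +
        3.31 * t * σ ^ (-(b * t) - 1) := by
  have ht0 := ht.1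
  have hL : 0 ≤ ∑ n ∈ Icc 1 N, weightedNorm t n * (n : ℝ) ^ (-(1 + σ)) :=
    sum_nonneg fun n _ => mul_nonneg (weightedNorm_nonneg ht0 n) (by positivity)
  have hT := rpow_mul_sum_pow_card_primeFactors_mul_card_divisors_le ht hb hσ hσ1 N
  have hlog : log 4 ≤ 1.3863 := by linarith [log_four_eq, log_two_lt_d9]
  refine (sum_weightedNorm_mul_rpow_mul_log_le ht0 hσ N).trans ?_
  generalize ∑ n ∈ Icc 1 N, weightedNorm t n * (n : ℝ) ^ (-(1 + σ)) = L at *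
  generalize ∑ n ∈ Icc 1 N, t ^ #n.primeFactors * #n.divisors * (n : ℝ) ^ (-(1 + σ)) = T at *
  have : 0 < σ ^ (-(b * t)) := rpow_pos_of_pos hσ _
  calc t * ((1 / σ + log 4) * (1.19 * L + 3.2 * (σ ^ (3 / 4 : ℝ) * T)) + 28 * L)
      ≤ t * ((1 / σ + log 4) * (1.19 * L + 3.2 * (1.0201 * σ ^ (-(b * t)))) + 28 * L) := by
        have : 0 ≤ log 4 := log_nonneg (by norm_num)
        gcongr
    _ ≤ t * ((1 / σ + 1.3863) * (1.19 * L + 3.2 * (1.0201 * σ ^ (-(b * t)))) + 28 * L) := by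
        gcongr
    _ = t * ((1.19 / σ + 29.649697) * L +
          3.26432 * (1 + 1.3863 * σ) * (σ ^ (-(b * t)) / σ)) := by
        field_simp
        ring
    _ ≤ t * ((1.19 / σ + 30) * L + 3.31 * (σ ^ (-(b * t)) / σ)) := by
        gcongr
        · norm_num
        · linarith
    _ = _ := by
        rw [rpow_sub_one hσ.ne']
        ring

lemma sum_weightedNorm_mul_rpow_le {t b σ : ℝ} (ht : t ∈ Set.Icc 0 1) (hb : 1.27 ≤ b)
    (hσ : 0 < σ) (hσ1 : σ ≤ 1) (N : ℕ) :
    ∑ n ∈ Icc 1 N, weightedNorm t n * (n : ℝ) ^ (-(1 + σ)) ≤ 60 * σ ^ (-(b * t)) := by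
  have hb' : 5 / 4 ≤ b := by linarith
  have ht0 := ht.1
  have hexp : exp (30 * t * (1 / 100)) ≤ 1.43 := by
    have hexp_neg : 1 - 0.3 ≤ exp (-0.3) := by linarith [add_one_le_exp (-0.3)]
    calc exp (30 * t * (1 / 100)) ≤ exp 0.3 := exp_le_exp.2 (by linarith [ht.2])
      _ = (exp (-0.3))⁻¹ := by rw [exp_neg, inv_inv]
      _ ≤ (1 - 0.3)⁻¹ := by gcongr
      _ ≤ 1.43 := by norm_num
  have hL0 (s : ℝ) : 0 ≤ ∑ n ∈ Icc 1 N, weightedNorm t n * (n : ℝ) ^ (-(1 + s)) :=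
    sum_nonneg fun n _ => mul_nonneg (weightedNorm_nonneg ht0 n) (by positivity)
  rcases le_total σ (1 / 100) with hsmall | hlarge
  · refine le_mul_rpow_neg_of_deriv_le (c := 1 / 100)
      (L := fun s => ∑ n ∈ Icc 1 N, weightedNorm t n * (n : ℝ) ^ (-(1 + s))) (α := 1.19 * t)
      (by positivity) (by positivity) hL0
      (fun s _ => hasDerivAt_sum_mul_rpow_neg_one_add (weightedNorm t) N s)
      (fun s hs => sum_weightedNorm_mul_rpow_mul_log_le_of_le ht hb' hs.1 hs.2 N) ?_ ?_ ⟨hσ, hsmall⟩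
    · calc 3.31 * t * exp (30 * t * (1 / 100)) ≤ 3.31 * t * 1.43 := by gcongr
        _ ≤ 60 * (b * t - 1.19 * t) := by nlinarith
    · calc _ ≤ 1.43 * (35 * (1 / 100 : ℝ) ^ (-(b * t))) := by
            gcongr
            exacts [hL0 _, sum_weightedNorm_mul_rpow_le_of_ge ht hb' le_rfl (by norm_num) N]
        _ ≤ 60 * (1 / 100 : ℝ) ^ (-(b * t)) := by
            have : 0 ≤ (1 / 100 : ℝ) ^ (-(b * t)) := by positivity
            linarith
  · refine (sum_weightedNorm_mul_rpow_le_of_ge ht hb' hlarge hσ1 N).trans ?_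
    gcongr
    norm_num

/-! ### Summation up to `x` -/

lemma exists_hooleyDelta_eq (n : ℕ) :
    ∃ u : ℝ, hooleyDelta n =
      #(n.divisors.filter fun d : ℕ => exp u < (d : ℝ) ∧ (d : ℝ) ≤ exp (u + 1)) := by
  have hbdd : BddAbove {m : ℕ | ∃ u : ℝ,
      m = #(n.divisors.filter fun d : ℕ => exp u < (d : ℝ) ∧ (d : ℝ) ≤ exp (u + 1))} := by
    refine ⟨#n.divisors, ?_⟩
    rintro _ ⟨u, rfl⟩
    exact card_filter_le _ _
  exact Nat.sSup_mem (by exact ⟨_, 0, rfl⟩) hbdd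

lemma card_divisors_window_le (n : ℕ) (u : ℝ) :
    (#(n.divisors.filter fun d : ℕ => exp u < (d : ℝ) ∧ (d : ℝ) ≤ exp (u + 1)) : ℝ) ≤
      exp (1 / 2) * divisorProfile n (u + 1 / 2) := by
  rw [card_eq_sum_ones, Nat.cast_sum, divisorProfile, mul_sum]
  refine (sum_le_sum fun d hd => ?_).trans (sum_le_sum_of_subset_of_nonneg
    (filter_subset _ _) fun d _ _ => by positivity)
  obtain ⟨-, hlower, hupper⟩ := mem_filter.1 hd
  have hd0 : (0 : ℝ) < d := (exp_pos u).trans hlower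
  have hdist : |u + 1 / 2 - log d| ≤ 1 / 2 := by
    rw [abs_le]
    constructor <;> linarith [(lt_log_iff_exp_lt hd0).2 hlower, (log_le_iff_le_exp hd0).2 hupper]
  rw [Nat.cast_one, ← exp_add, one_le_exp_iff]
  linarith

lemma hooleyDelta_le_profileNorm (n : ℕ) : (hooleyDelta n : ℝ) ≤ exp (1 / 2) * profileNorm n := by
  obtain ⟨u, hu⟩ := exists_hooleyDelta_eq n
  rw [hu]
  exact (card_divisors_window_le n u).trans (by gcongr; exact divisorProfile_le_profileNorm n _)

lemma log_exp_one_mul {x : ℝ} (hx : 0 < x) : log (exp 1 * x) = 1 + log x := by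
  rw [log_mul (exp_pos 1).ne' hx.ne', log_exp]

lemma sum_mul_log_exp_one_mul_le {g : ℕ → ℝ} (hg0 : ∀ n, 0 ≤ g n)
    (hg : ∀ m p k : ℕ, p.Prime → ¬p ∣ m → k ≠ 0 → g (m * p ^ k) ≤ g m * (k + 1))
    {x : ℝ} (hx : 0 < x) :
    (∑ n ∈ Icc 1 ⌊x⌋₊, g n) * log (exp 1 * x) ≤ 32 * x * ∑ n ∈ Icc 1 ⌊x⌋₊, g n / n := by
  have hsum : 0 ≤ ∑ n ∈ Icc 1 ⌊x⌋₊, g n / n :=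
    sum_nonneg fun n _ => div_nonneg (hg0 n) n.cast_nonneg
  have hlog {n : ℕ} (hn : n ∈ Icc 1 ⌊x⌋₊) : log (exp 1 * x) ≤ log n + x / n := by
    have hn0 : (0 : ℝ) < n := Nat.cast_pos.2 (mem_Icc.1 hn).1
    have hratio := log_le_sub_one_of_pos (div_pos hx hn0)
    rw [log_div hx.ne' hn0.ne'] at hratio
    linarith [log_exp_one_mul hx]
  calc (∑ n ∈ Icc 1 ⌊x⌋₊, g n) * log (exp 1 * x)
      ≤ ∑ n ∈ Icc 1 ⌊x⌋₊, g n * (log n + x / n) := by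
        rw [sum_mul]
        exact sum_le_sum fun n hn => mul_le_mul_of_nonneg_left (hlog hn) (hg0 n)
    _ = ∑ n ∈ Icc 1 ⌊x⌋₊, g n * log n + x * ∑ n ∈ Icc 1 ⌊x⌋₊, g n / n := by
        rw [mul_sum, ← sum_add_distrib]
        exact sum_congr rfl fun n _ => by ring
    _ ≤ (2 * log 4 + 28) * ⌊x⌋₊ * (∑ n ∈ Icc 1 ⌊x⌋₊, g n / n) +
          x * ∑ n ∈ Icc 1 ⌊x⌋₊, g n / n := by
        gcongr
        exact sum_mul_log_le_mul_sum_div hg0 hg _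
    _ ≤ 31 * x * (∑ n ∈ Icc 1 ⌊x⌋₊, g n / n) + x * ∑ n ∈ Icc 1 ⌊x⌋₊, g n / n := by
        gcongr
        · linarith [log_four_eq, log_two_lt_d9]
        · exact Nat.floor_le hx.le
    _ = _ := by ring

lemma sum_div_le_exp_one_mul_sum_mul_rpow {g : ℕ → ℝ} (hg0 : ∀ n, 0 ≤ g n) {x : ℝ} (hx : 1 ≤ x) :
    ∑ n ∈ Icc 1 ⌊x⌋₊, g n / n ≤
      exp 1 * ∑ n ∈ Icc 1 ⌊x⌋₊, g n * (n : ℝ) ^ (-(1 + 1 / log (exp 1 * x))) := by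
  have hx0 : 0 < x := zero_lt_one.trans_le hx
  rw [mul_sum]
  refine sum_le_sum fun n hn => ?_
  have hn0 : (0 : ℝ) < n := Nat.cast_pos.2 (mem_Icc.1 hn).1
  have hnx : (n : ℝ) ≤ x := (Nat.le_floor_iff hx0.le).1 (mem_Icc.1 hn).2
  have hpow : (n : ℝ) ^ (1 / log (exp 1 * x)) ≤ exp 1 := by
    rw [rpow_def_of_pos hn0, exp_le_exp, mul_one_div, log_exp_one_mul hx0]
    exact div_le_one_of_le₀ (by linarith [log_le_log hn0 hnx]) (by linarith [log_nonneg hx])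
  calc g n / n = (n : ℝ) ^ (1 / log (exp 1 * x)) *
          (g n * (n : ℝ) ^ (-(1 + 1 / log (exp 1 * x)))) := by
        rw [rpow_neg hn0.le, rpow_add hn0, rpow_one]
        field_simp
    _ ≤ _ := by
        have := hg0 n
        gcongr

lemma sum_weightedNorm_mul_log_le {x t b : ℝ} (hx : 1 ≤ x) (ht : t ∈ Set.Icc 0 1)
    (hb : 1.27 ≤ b) :
    (∑ n ∈ Icc 1 ⌊x⌋₊, weightedNorm t n) * log (exp 1 * x) ≤
      32 * x * (exp 1 * (60 * log (exp 1 * x) ^ (b * t))) := by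
  have hx0 : 0 < x := zero_lt_one.trans_le hx
  have hlog : 1 ≤ log (exp 1 * x) := by linarith [log_exp_one_mul hx0, log_nonneg hx]
  have hw := weightedNorm_nonneg ht.1
  have hgrowth (m p k : ℕ) (hp : p.Prime) (hpm : ¬p ∣ m) (hk : k ≠ 0) :
      weightedNorm t (m * p ^ k) ≤ weightedNorm t m * (k + 1) :=
    (weightedNorm_mul_prime_pow_le ht.1 hp hpm hk).trans
      (by gcongr; exact mul_le_of_le_one_left (hw m) ht.2)
  have hseries := sum_weightedNorm_mul_rpow_le ht hb (σ := 1 / log (exp 1 * x)) (by positivity)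
    ((div_le_one (by positivity)).2 hlog) ⌊x⌋₊
  rw [one_div, inv_rpow (by positivity), ← rpow_neg (by positivity), neg_neg, ← one_div] at hseries
  refine (sum_mul_log_exp_one_mul_le hw hgrowth hx0).trans ?_
  gcongr
  exact (sum_div_le_exp_one_mul_sum_mul_rpow hw hx).trans (by gcongr)

lemma exp_half_lt : exp (1 / 2) < 1.65 := by
  refine lt_of_pow_lt_pow_left₀ 2 (by norm_num) ?_
  rw [← exp_nat_mul, Nat.cast_ofNat, mul_one_div_cancel two_ne_zero]
  exact exp_one_lt_d9.trans (by norm_num)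

theorem statement_3_general (x : ℝ) (hx : 1 ≤ x) (t : ℝ) (ht : t ∈ Set.Icc (0 : ℝ) 1) {b : ℝ}
    (hb : 1.27 ≤ b) :
    ∑ n ∈ Icc 1 ⌊x⌋₊, t ^ #n.primeFactors * (hooleyDelta n : ℝ) <
      9380 * x * log (exp 1 * x) ^ (-1 + b * t) := by
  have hx0 : 0 < x := zero_lt_one.trans_le hx
  have hlog : 0 < log (exp 1 * x) := by linarith [log_exp_one_mul hx0, log_nonneg hx]
  have hpow : 0 < log (exp 1 * x) ^ (b * t) := rpow_pos_of_pos hlog _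
  rw [rpow_add hlog, rpow_neg_one, mul_left_comm, ← div_eq_inv_mul, lt_div_iff₀ hlog]
  calc (∑ n ∈ Icc 1 ⌊x⌋₊, t ^ #n.primeFactors * (hooleyDelta n : ℝ)) * log (exp 1 * x)
      ≤ exp (1 / 2) * (∑ n ∈ Icc 1 ⌊x⌋₊, weightedNorm t n) * log (exp 1 * x) := by
        gcongr
        rw [mul_sum]
        refine sum_le_sum fun n _ => ?_
        rw [weightedNorm, mul_left_comm]
        exact mul_le_mul_of_nonneg_left (hooleyDelta_le_profileNorm n) (pow_nonneg ht.1 _)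
    _ ≤ exp (1 / 2) * (32 * x * (exp 1 * (60 * log (exp 1 * x) ^ (b * t)))) := by
        rw [mul_assoc]
        exact mul_le_mul_of_nonneg_left (sum_weightedNorm_mul_log_le hx ht hb) (exp_pos _).le
    _ ≤ 1.65 * (32 * x * (2.7183 * (60 * log (exp 1 * x) ^ (b * t)))) := by
        gcongr
        · exact exp_half_lt.le
        · exact exp_one_lt_d9.le.trans (by norm_num)
    _ < 9380 * x * log (exp 1 * x) ^ (b * t) := by nlinarith [mul_pos hx0 hpow]

lemma le_four_div_pi : 1.27 ≤ 4 / π := by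
  rw [le_div_iff₀ pi_pos]
  linarith [pi_lt_d4]

end

theorem statement_3 (x : ℝ) (hx : 1 ≤ x) (t : ℝ) (ht : t ∈ Set.Icc (0 : ℝ) 1) :
    ∑ n ∈ Finset.Icc 1 ⌊x⌋₊, t ^ n.primeFactors.card * (hooleyDelta n : ℝ) <
      9380 * x * Real.log (Real.exp 1 * x) ^ (-1 + 4 * t / Real.pi) := by
  rw [mul_div_right_comm]
  exact statement_3_general x hx t ht le_four_div_pi
end

section
/- Let a, b > 0 be real numbers with ab ≥ e²/4, and set c := e/(e−1). Then for every real x, if x ≥ (2^{log 16} (ab)^{log(16ab)})^{c²a}, then log x ≥ a (log(b log x))². -/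
/-!
Write `y = log x`, `c = e / (e - 1)` and `L = log (4ab)`. The logarithm of the threshold for `x` is
`a (c L)²`, so the substitution `y = a (2s)²` turns the hypothesis into `c |L / 2| ≤ s`. Since
`log (b y) = 2 (L / 2 + log s)`, the conclusion becomes `|L / 2 + log s| ≤ s`. The constant `c` is
chosen so that `|L / 2| ≤ s - s / e`, and the remaining `s / e` absorbs `|log s|`: the tangent line
of `log` at `e` passes through the origin, and `1 ≤ |L|` keeps `s` away from `0`.
-/

open Real

theorem log_le_div_exp_one {s : ℝ} (hs : 0 < s) : log s ≤ s / exp 1 := by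
  have h := log_le_sub_one_of_pos (div_pos hs (exp_pos 1))
  rw [log_div hs.ne' (exp_pos 1).ne', log_exp] at h
  linarith

-- `7 / 9` lies between the root `0.756…` of `-log s = s / e` and `e / (2 (e - 1)) = 0.790…`, the
-- least value of `s` allowed in `abs_add_log_le`.
theorem abs_log_le_div_exp_one {s : ℝ} (hs : 7 / 9 ≤ s) : |log s| ≤ s / exp 1 := by
  have hs0 : 0 < s := by linarith
  refine abs_le'.2 ⟨log_le_div_exp_one hs0, ?_⟩
  calc
    -log s ≤ s⁻¹ - 1 := by linarith [one_sub_inv_le_log_of_pos hs0]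
    _ ≤ (7 / 9)⁻¹ - 1 := by gcongr
    _ ≤ (7 / 9) / exp 1 := by
      rw [le_div_iff₀ (exp_pos 1)]
      linarith [exp_one_lt_d9]
    _ ≤ s / exp 1 := by gcongr

theorem one_le_abs_log_of_exp_one_le {p : ℝ} (hp : exp 1 ≤ p) : 1 ≤ |log p| :=
  ((le_log_iff_exp_le ((exp_pos 1).trans_le hp)).2 hp).trans (le_abs_self _)

theorem abs_add_log_le {m s : ℝ} (hm : 1 / 2 ≤ |m|)
    (hs : exp 1 / (exp 1 - 1) * |m| ≤ s) : |m + log s| ≤ s := by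
  have he : 0 < exp 1 - 1 := sub_pos.2 (one_lt_exp_iff.2 one_pos)
  have hc : 14 / 9 ≤ exp 1 / (exp 1 - 1) := by
    rw [le_div_iff₀ he]
    linarith [exp_one_lt_d9]
  have hs' : 7 / 9 ≤ s := by nlinarith
  have hms : |m| ≤ s - s / exp 1 := by
    rw [div_mul_eq_mul_div, div_le_iff₀ he] at hs
    rw [sub_div' (exp_pos 1).ne', le_div_iff₀ (exp_pos 1)]
    linarith
  calc
    |m + log s| ≤ |m| + |log s| := abs_add_le m (log s)
    _ ≤ (s - s / exp 1) + s / exp 1 := add_le_add hms (abs_log_le_div_exp_one hs')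
    _ = s := sub_add_cancel s (s / exp 1)

theorem log_mul_mul_two_mul_sq {a b s : ℝ} (ha : a ≠ 0) (hb : b ≠ 0) (hs : s ≠ 0) :
    log (b * (a * (2 * s) ^ 2)) = 2 * (log (4 * (a * b)) / 2 + log s) := by
  rw [show b * (a * (2 * s) ^ 2) = 4 * (a * b) * s ^ 2 by ring,
    log_mul (by positivity) (by positivity), log_pow]
  push_cast
  ring

theorem mul_sq_log_mul_le {a b y : ℝ} (ha : 0 < a) (hb : 0 < b)
    (hab : 1 ≤ |log (4 * (a * b))|)
    (hy : (exp 1 / (exp 1 - 1)) ^ 2 * a * log (4 * (a * b)) ^ 2 ≤ y) :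
    a * log (b * y) ^ 2 ≤ y := by
  set c := exp 1 / (exp 1 - 1)
  set L := log (4 * (a * b)) with hL
  have hc : 0 < c := div_pos (exp_pos 1) (sub_pos.2 (one_lt_exp_iff.2 one_pos))
  have hL0 : L ≠ 0 := abs_pos.1 (one_pos.trans_le hab)
  have hy0 : 0 < y := lt_of_lt_of_le (by positivity) hy
  obtain ⟨s, hs, rfl⟩ : ∃ s, 0 < s ∧ a * (2 * s) ^ 2 = y := by
    refine ⟨√(y / a) / 2, by positivity, ?_⟩
    rw [mul_div_cancel₀ _ two_ne_zero, sq_sqrt (by positivity), mul_div_cancel₀ y ha.ne']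
  have hLs : c * |L / 2| ≤ s := by
    have hsq : (c * |L|) ^ 2 ≤ (2 * s) ^ 2 := by
      rw [mul_pow, sq_abs]
      refine le_of_mul_le_mul_left ?_ ha
      linarith
    rw [abs_div, abs_two]
    linarith [le_of_sq_le_sq hsq (by positivity)]
  have hm : 1 / 2 ≤ |L / 2| := by
    rw [abs_div, abs_two]
    gcongr
  rw [log_mul_mul_two_mul_sq ha.ne' hb.ne' hs.ne', ← hL, mul_pow, mul_pow]
  gcongr a * (2 ^ 2 * ?_)
  exact sq_le_sq.2 ((abs_add_log_le hm hLs).trans (le_abs_self s))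

theorem log_two_rpow_mul_rpow {p : ℝ} (hp : 0 < p) :
    log ((2 : ℝ) ^ log 16 * p ^ log (16 * p)) = log (4 * p) ^ 2 := by
  have h16 : log 16 = 4 * log 2 := by
    rw [show (16 : ℝ) = 2 ^ 4 by norm_num, log_pow, Nat.cast_ofNat]
  have h4 : log 4 = 2 * log 2 := by
    rw [show (4 : ℝ) = 2 ^ 2 by norm_num, log_pow, Nat.cast_ofNat]
  rw [log_mul (by positivity) (by positivity), log_rpow two_pos, log_rpow hp,
    log_mul (by norm_num) hp.ne', log_mul (by norm_num) hp.ne', h16, h4]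
  ring

theorem statement_5_general (a b : ℝ) (ha : 0 < a) (hb : 0 < b)
    (hab : 1 ≤ |log (4 * (a * b))|) (x : ℝ)
    (hx : ((2 : ℝ) ^ log 16 * (a * b) ^ log (16 * a * b)) ^
        ((exp 1 / (exp 1 - 1)) ^ 2 * a) ≤ x) :
    a * log (b * log x) ^ 2 ≤ log x := by
  have hlog := log_le_log (by positivity) hx
  rw [log_rpow (by positivity), mul_assoc 16 a b, log_two_rpow_mul_rpow (mul_pos ha hb)] at hlog
  exact mul_sq_log_mul_le ha hb hab hlog

theorem statement_5 (a b : ℝ) (ha : 0 < a) (hb : 0 < b)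
    (hab : Real.exp 1 ^ 2 / 4 ≤ a * b) (x : ℝ)
    (hx : ((2 : ℝ) ^ Real.log 16 * (a * b) ^ Real.log (16 * a * b)) ^
        ((Real.exp 1 / (Real.exp 1 - 1)) ^ 2 * a) ≤ x) :
    a * Real.log (b * Real.log x) ^ 2 ≤ Real.log x := by
  have he : exp 1 ≤ 4 * (a * b) := by nlinarith [one_lt_exp_iff.2 (one_pos : (0 : ℝ) < 1)]
  exact statement_5_general a b ha hb (one_le_abs_log_of_exp_one_le he) x hx
end
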